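/- arXiv:2502.09958 — 3 statements merged into one kernel-verified Lean document; each statement's English description precedes it below -/
import Mathlib

section
/- The genus of the 2-sphere S² = {x ∈ ℝ³ : ‖x‖ = 1} is 0; that is, for every subset C ⊆ S² homeomorphic to the circle S¹, the complement S² \ C is disconnected. -/
/-- The genus of a topological space `X`: the supremum of the numbers `m` for which there exist
`m` pairwise disjoint subsets of `X`, each homeomorphic to the circle `S¹`, whose union has
connected complement. -/
noncomputable def genus (X : Type*) [TopologicalSpace X] : ℕ :=
  sSup {m : ℕ | ∃ C : Fin m → Set X,
    (Pairwise fun i j => Disjoint (C i) (C j)) ∧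
    (∀ i, Nonempty (↥(C i) ≃ₜ ↥(Metric.sphere (0 : EuclideanSpace ℝ (Fin 2)) 1))) ∧
    IsConnected (⋃ i, C i)ᶜ}

open Set Topology unitInterval

theorem JS.log_unique {X : Type*} [TopologicalSpace X] {S : Set X} (hS : IsPreconnected S)
    {f g : X → ℂ} (hf : ContinuousOn f S) (hg : ContinuousOn g S)
    (h : ∀ x ∈ S, Complex.exp (f x) = Complex.exp (g x)) {x₀ : X} (hx₀ : x₀ ∈ S)
    (h0 : f x₀ = g x₀) : ∀ x ∈ S, f x = g x := by
  have : PreconnectedSpace S := isPreconnected_iff_preconnectedSpace.mp hS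
  have := Complex.isCoveringMap_exp.eq_of_comp_eq
    (continuousOn_iff_continuous_domRestrict.mp hf) (continuousOn_iff_continuous_domRestrict.mp hg)
    (by ext x; simpa using h x.1 x.2) ⟨x₀, hx₀⟩ (by simpa using h0)
  intro x hx
  simpa using congrFun this ⟨x, hx⟩

theorem JS.no_log (g : ℂ → ℂ) (hg : ContinuousOn g {0}ᶜ)
    (h : ∀ z, z ≠ 0 → Complex.exp (g z) = z) : False := by
  have hc : Continuous fun θ : ℝ => g (Complex.exp (θ * Complex.I)) :=
    hg.comp_continuous (by fun_prop) (fun θ => Complex.exp_ne_zero _)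
  have := JS.log_unique (S := univ) isPreconnected_univ hc.continuousOn
    (g := fun θ : ℝ => (θ * Complex.I) + g 1) (by fun_prop)
    (by intro θ _; rw [h _ (Complex.exp_ne_zero _), Complex.exp_add, h _ one_ne_zero, mul_one])
    (x₀ := 0) (mem_univ _) (by simp) (2 * Real.pi) (mem_univ _)
  simp at this

/-- existence of the logarithm off an arc -/
theorem JS.exists_log (a : C(I, ℂ)) (h0 : a 0 = 0) (U : Set ℂ)
    (hU : ∀ u ∈ U, ∀ t, 1 - u * a t ≠ 0) :
    ∃ f : ℂ → ℂ, ContinuousOn f U ∧ ∀ u ∈ U, Complex.exp (f u) = 1 - u * a 1 := by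
  classical
  let H : C(I × U, {z : ℂ // z ≠ 0}) :=
    ⟨fun x => ⟨1 - x.2.1 * a x.1, hU x.2.1 x.2.2 x.1⟩, by fun_prop⟩
  let L := Complex.isCoveringMap_exp.liftHomotopy H (ContinuousMap.const U 0)
    (by intro u; ext; simp [H, h0])
  have hL := Complex.isCoveringMap_exp.liftHomotopy_lifts H (ContinuousMap.const U 0)
    (by intro u; ext; simp [H, h0])
  refine ⟨fun z => if hz : z ∈ U then L (1, ⟨z, hz⟩) else 0, ?_, ?_⟩
  · rw [continuousOn_iff_continuous_domRestrict]
    have : Continuous fun u : U => L (1, u) := by fun_prop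
    convert this using 1
    ext u
    simp
  · intro u hu
    have := congrArg Subtype.val (congrFun hL (1, ⟨u, hu⟩))
    simp only [hu, dif_pos]
    exact this

theorem JS.isOpen_aux (W : Set ℂ) (hW : IsCompact W) :
    IsOpen {u : ℂ | ∀ w ∈ W, 1 - u * w ≠ 0} := by
  have := isCompact_iff_compactSpace.mp hW
  have : {u : ℂ | ∀ w ∈ W, 1 - u * w ≠ 0} =
      (Prod.snd '' {x : W × ℂ | 1 - x.2 * x.1.1 = 0})ᶜ := by
    ext u
    simp
  rw [this, isOpen_compl_iff]
  exact isClosedMap_snd_of_compactSpace _ (isClosed_eq (by fun_prop) (by fun_prop))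

theorem JS.planar (a b : C(I, ℂ)) (ha0 : a 0 = 0) (hb0 : b 0 = 0) (hab : a 1 = b 1)
    (h1 : a 1 ≠ 0) (W : Set ℂ) (hW : IsCompact W) (hbW : range b ⊆ W)
    (hint : ∀ t, a t ∈ W → a t = 0 ∨ a t = a 1) :
    ¬ IsPreconnected {u : ℂ | ∀ w ∈ range a ∪ W, 1 - u * w ≠ 0} := by
  classical
  intro hpre
  set U : Set ℂ := {u : ℂ | ∀ w ∈ range a, 1 - u * w ≠ 0} with hUdef
  set V : Set ℂ := {u : ℂ | ∀ w ∈ W, 1 - u * w ≠ 0} with hVdef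
  have hUo : IsOpen U := JS.isOpen_aux _ (isCompact_range a.continuous)
  have hVo : IsOpen V := JS.isOpen_aux _ hW
  have hUV : {u : ℂ | ∀ w ∈ range a ∪ W, 1 - u * w ≠ 0} = U ∩ V := by
    ext u
    simp only [hUdef, hVdef, mem_union, mem_ofPred_eq, mem_inter_iff]
    exact ⟨fun h => ⟨fun w hw => h w (.inl hw), fun w hw => h w (.inr hw)⟩,
      fun h w hw => hw.elim (h.1 w) (h.2 w)⟩
  rw [hUV] at hpre
  obtain ⟨f, hf, hfe⟩ := JS.exists_log a ha0 U (fun u hu t => hu _ ⟨t, rfl⟩)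
  obtain ⟨g, hg, hge⟩ := JS.exists_log b hb0 V (fun u hu t => hu _ (hbW ⟨t, rfl⟩))
  have h0 : (0 : ℂ) ∈ U ∩ V := by simp [hUdef, hVdef]
  have hshift : ∀ u ∈ V, Complex.exp (g u + (f 0 - g 0)) = 1 - u * a 1 := by
    intro u hu
    rw [Complex.exp_add, Complex.exp_sub, hge u hu, hge 0 h0.2, hfe 0 h0.1, hab]
    simp
  have key := JS.log_unique hpre (hf.mono inter_subset_left)
    (g := fun u => g u + (f 0 - g 0)) ((hg.mono inter_subset_right).add continuousOn_const)
    (fun u hu => by rw [hfe u hu.1, hshift u hu.2]) h0 (by simp)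
  let F : ℂ → ℂ := fun u => if u ∈ U then f u else g u + (f 0 - g 0)
  have hFU : EqOn F f U := fun u hu => by simp [F, hu]
  have hFV : EqOn F (fun u => g u + (f 0 - g 0)) V := fun u hu => by
    by_cases hu' : u ∈ U
    · simpa [F, hu'] using key u ⟨hu', hu⟩
    · simp [F, hu']
  have hcov : ∀ u, 1 - u * a 1 ≠ 0 → u ∈ U ∪ V := by
    intro u hu
    by_contra hcon
    simp only [hUdef, hVdef, mem_union, mem_ofPred_eq, not_or, not_forall, not_not] at hcon
    obtain ⟨⟨_, ⟨t, rfl⟩, h2⟩, w, hw, h3⟩ := hcon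
    have hu0 : u ≠ 0 := by rintro rfl; simp at h2
    have : a t = w := mul_left_cancel₀ hu0 (by linear_combination h3 - h2)
    rcases hint t (this ▸ hw) with h | h
    · simp [h] at h2
    · rw [h] at h2; exact hu h2
  have hF : ContinuousOn F (U ∪ V) :=
    (hf.congr hFU).union_of_isOpen ((hg.add continuousOn_const).congr hFV) hUo hVo
  have hFe : ∀ u ∈ U ∪ V, Complex.exp (F u) = 1 - u * a 1 := by
    rintro u (hu | hu)
    · rw [hFU hu, hfe u hu]
    · rw [hFV hu]; exact hshift u hu
  refine JS.no_log (fun z => F ((1 - z) / a 1)) (hF.comp (by fun_prop) ?_) ?_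
  · intro z hz
    apply hcov
    rw [div_mul_cancel₀ _ h1]; simpa using hz
  · intro z hz
    rw [hFe _ (hcov _ (by rw [div_mul_cancel₀ _ h1]; simpa using hz)), div_mul_cancel₀ _ h1]
    ring

abbrev JS.S2 := ↥(Metric.sphere (0 : EuclideanSpace ℝ (Fin 3)) 1)
abbrev JS.S1 := ↥(Metric.sphere (0 : EuclideanSpace ℝ (Fin 2)) 1)

theorem JS.chart (c : JS.S2) : ∃ (φ : JS.S2 → ℂ) (τ : ℂ → JS.S2), ContinuousOn φ {c}ᶜ ∧
    Continuous τ ∧ (∀ w, τ w ≠ c) ∧ (∀ w, φ (τ w) = w) ∧ (∀ z, z ≠ c → τ (φ z) = z) ∧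
    Filter.Tendsto φ (𝓝[≠] c) (Bornology.cobounded ℂ) := by
  have : Fact (Module.finrank ℝ (EuclideanSpace ℝ (Fin 3)) = 2 + 1) := ⟨by simp⟩
  let e := (stereographic' 2 c).trans
    Complex.orthonormalBasisOneI.repr.symm.toHomeomorph.toOpenPartialHomeomorph
  have hs : e.source = {c}ᶜ := by simp [e]
  have ht : e.target = univ := by simp [e]
  have hcont : Continuous e.symm := by
    rw [← continuousOn_univ, ← ht]; exact e.continuousOn_symm
  have hne : ∀ w, e.symm w ≠ c := fun w => by
    have := e.map_target (x := w) (by simp [ht])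
    rw [hs] at this; exact this
  have hinv : ∀ z, z ≠ c → e.symm (e z) = z := fun z hz => e.left_inv (by rw [hs]; exact hz)
  refine ⟨e, e.symm, hs ▸ e.continuousOn, hcont, hne, fun w => e.right_inv (by simp [ht]),
    hinv, ?_⟩
  rw [Metric.cobounded_eq_cocompact, (Filter.hasBasis_cocompact).tendsto_right_iff]
  intro M hM
  have hcl : IsClosed (e.symm '' M) := (hM.image hcont).isClosed
  have hc : c ∉ e.symm '' M := by rintro ⟨w, _, hw⟩; exact hne w hw
  have h1 : ∀ᶠ z in 𝓝[≠] c, z ∈ (e.symm '' M)ᶜ :=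
    mem_nhdsWithin_of_mem_nhds (hcl.isOpen_compl.mem_nhds hc)
  filter_upwards [h1, self_mem_nhdsWithin] with z hz hzc hzM
  exact hz ⟨_, hzM, hinv z hzc⟩

theorem JS.sphere_sep (α β : C(I, JS.S2)) (h0 : α 0 = β 0) (h1 : α 1 = β 1) (hne : α 0 ≠ α 1)
    (B : Set JS.S2) (hB : IsClosed B) (hβ : range β ⊆ B)
    (hint : ∀ t, α t ∈ B → α t = α 0 ∨ α t = α 1) (hK : (range α ∪ B)ᶜ.Nonempty) :
    ¬ IsPreconnected (range α ∪ B)ᶜ := by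
  classical
  obtain ⟨c, hc⟩ := hK
  simp only [mem_compl_iff, mem_union, not_or] at hc
  obtain ⟨hcα, hcB⟩ := hc
  have hα : ∀ t, α t ≠ c := fun t h => hcα ⟨t, h⟩
  have hBc : ∀ z ∈ B, z ≠ c := fun z hz h => hcB (h ▸ hz)
  have hβc : ∀ t, β t ≠ c := fun t => hBc _ (hβ ⟨t, rfl⟩)
  obtain ⟨φ, τ, hφ, hτ, hτc, hφτ, hτφ, hlim⟩ := JS.chart c
  have hinj : ∀ x y, x ≠ c → y ≠ c → φ x = φ y → x = y := fun x y hx hy h => by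
    rw [← hτφ x hx, ← hτφ y hy, h]
  intro hpre
  let q := α 0
  have hqc : q ≠ c := hα 0
  let a : C(I, ℂ) := ⟨fun t => φ (α t) - φ q, (hφ.comp_continuous α.continuous hα).sub
    continuous_const⟩
  let b : C(I, ℂ) := ⟨fun t => φ (β t) - φ q, (hφ.comp_continuous β.continuous hβc).sub
    continuous_const⟩
  let W : Set ℂ := (fun z => φ z - φ q) '' B
  have hW : IsCompact W := hB.isCompact.image_of_continuousOn
    ((hφ.mono fun z hz => hBc z hz).sub continuousOn_const)
  refine JS.planar a b (by simp [a, q]) (by simp [b, q, h0]) (by simp [a, b, h1]) ?_ W hW ?_ ?_ ?_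
  · intro h
    exact hne (hinj _ _ (hα 0) (hα 1) (sub_eq_zero.mp h).symm)
  · rintro _ ⟨t, rfl⟩
    exact ⟨β t, hβ ⟨t, rfl⟩, rfl⟩
  · rintro t ⟨z, hz, hzt⟩
    have : z = α t := hinj _ _ (hBc z hz) (hα t) (sub_left_injective hzt)
    rcases hint t (this ▸ hz) with h | h
    · left; simp [a, q, h]
    · right; simp [a, h]
  · let ψ : JS.S2 → ℂ := Function.update (fun z => (φ z - φ q)⁻¹) c 0
    have hψc : ψ c = 0 := by simp [ψ]
    have hψ : ∀ z, z ≠ c → ψ z = (φ z - φ q)⁻¹ := fun z hz => by simp [ψ, hz]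
    have hψcont : ∀ z, z ≠ q → ContinuousAt ψ z := by
      intro z hz
      by_cases hzc : z = c
      · subst hzc
        rw [continuousAt_update_same]
        refine Filter.tendsto_inv₀_cobounded.comp ?_
        have := (tendsto_sub_const_cobounded (φ q)).comp hlim
        exact this
      · rw [continuousAt_update_of_ne hzc]
        refine ContinuousAt.inv₀ ((hφ.continuousAt (isOpen_compl_singleton.mem_nhds hzc)).sub
          continuousAt_const) ?_
        intro h
        exact hz (hinj _ _ hzc hqc (sub_eq_zero.mp h))
    have himg : {u : ℂ | ∀ w ∈ range a ∪ W, 1 - u * w ≠ 0} = ψ '' (range α ∪ B)ᶜ := by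
      have hKW : range a ∪ W = (fun z => φ z - φ q) '' (range α ∪ B) := by
        rw [image_union, ← range_comp]; rfl
      have hKc : ∀ z ∈ range α ∪ B, z ≠ c := by
        rintro z (⟨t, rfl⟩ | hz)
        · exact hα t
        · exact hBc z hz
      have hqK : q ∈ range α ∪ B := .inl ⟨0, rfl⟩
      rw [hKW]
      ext u
      simp only [mem_ofPred_eq, forall_mem_image]
      constructor
      · intro h
        by_cases hu : u = 0
        · exact ⟨c, fun hh => hKc c hh rfl, by rw [hψc, hu]⟩
        · refine ⟨τ (u⁻¹ + φ q), fun hh => ?_, ?_⟩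
          · apply h hh
            rw [hφτ]; field_simp; ring
          · rw [hψ _ (hτc _), hφτ]; simp
      · rintro ⟨z, hz, rfl⟩ k hk h
        by_cases hzc : z = c
        · rw [hzc, hψc] at h; simp at h
        · rw [hψ z hzc] at h
          have hzq : φ z - φ q ≠ 0 := fun h' =>
            hz ((hinj _ _ hzc hqc (sub_eq_zero.mp h')) ▸ hqK)
          field_simp at h
          have : φ z = φ k := by linear_combination h
          exact hz ((hinj _ _ hzc (hKc k hk) this) ▸ hk)
    rw [himg]
    refine hpre.image _ fun z hz => (hψcont z ?_).continuousWithinAt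
    rintro rfl
    exact hz (.inl ⟨0, rfl⟩)

theorem JS.connected_two (p c : JS.S2) (h : p ≠ c) : IsPreconnected ({p, c}ᶜ : Set JS.S2) := by
  obtain ⟨φ, τ, hφ, hτ, hτc, hφτ, hτφ, hlim⟩ := JS.chart c
  have : ({p, c}ᶜ : Set JS.S2) = τ '' {φ p}ᶜ := by
    ext z
    simp only [mem_compl_iff, mem_insert_iff, mem_singleton_iff, not_or, mem_image]
    constructor
    · rintro ⟨h1, h2⟩
      exact ⟨φ z, fun h' => h1 (by rw [← hτφ z h2, h', hτφ p h]), hτφ z h2⟩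
    · rintro ⟨w, hw, rfl⟩
      exact ⟨fun h' => hw (by rw [← h', hφτ]), hτc w⟩
  rw [this]
  exact (isConnected_compl_singleton_of_one_lt_rank (by simp) _).isPreconnected.image _
    hτ.continuousOn

theorem JS.S1_eq (z : JS.S1) : z.1 0 ^ 2 + z.1 1 ^ 2 = 1 := by
  obtain ⟨z, this⟩ := z
  rw [EuclideanSpace.sphere_zero_eq _ zero_le_one] at this
  simpa [Fin.sum_univ_two] using this

noncomputable def JS.pt (s θ : ℝ) (hs : s ^ 2 = 1) : JS.S1 :=
  ⟨!₂[Real.cos θ, s * Real.sin θ], by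
    rw [EuclideanSpace.sphere_zero_eq _ zero_le_one]
    simp [Fin.sum_univ_two, mul_pow, hs]⟩

noncomputable def JS.arc (s : ℝ) (hs : s ^ 2 = 1) : C(I, JS.S1) :=
  ⟨fun t => JS.pt s (Real.pi * t) hs, by unfold JS.pt; fun_prop⟩

theorem JS.arc_0 (s : ℝ) (hs : s ^ 2 = 1) (t : I) : (JS.arc s hs t).1 0 = Real.cos (Real.pi * t) := by
  simp [JS.arc, JS.pt]

theorem JS.arc_1 (s : ℝ) (hs : s ^ 2 = 1) (t : I) :
    (JS.arc s hs t).1 1 = s * Real.sin (Real.pi * t) := by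
  simp [JS.arc, JS.pt]

theorem JS.S1_ext (z w : JS.S1) (h0 : z.1 0 = w.1 0) (h1 : z.1 1 = w.1 1) : z = w := by
  ext i; fin_cases i <;> assumption

theorem JS.sin_nonneg (t : I) : 0 ≤ Real.sin (Real.pi * t) :=
  Real.sin_nonneg_of_nonneg_of_le_pi (mul_nonneg Real.pi_pos.le t.2.1)
    (mul_le_of_le_one_right Real.pi_pos.le t.2.2)

theorem JS.range_arc : range (JS.arc 1 (by norm_num)) = {z : JS.S1 | 0 ≤ z.1 1} := by
  ext z
  simp only [mem_range, mem_ofPred_eq]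
  constructor
  · rintro ⟨t, rfl⟩
    rw [JS.arc_1, one_mul]; exact JS.sin_nonneg t
  · intro hz
    have hz1 := JS.S1_eq z
    have hm : -1 ≤ z.1 0 := by nlinarith [sq_nonneg (z.1 1)]
    have hM : z.1 0 ≤ 1 := by nlinarith [sq_nonneg (z.1 1)]
    refine ⟨⟨Real.arccos (z.1 0) / Real.pi, div_nonneg (Real.arccos_nonneg _) Real.pi_pos.le,
      div_le_one_of_le₀ (Real.arccos_le_pi _) Real.pi_pos.le⟩, JS.S1_ext _ _ ?_ ?_⟩
    · rw [JS.arc_0]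
      simp only []
      rw [mul_div_cancel₀ _ Real.pi_ne_zero, Real.cos_arccos hm hM]
    · rw [JS.arc_1, one_mul]
      simp only []
      rw [mul_div_cancel₀ _ Real.pi_ne_zero, Real.sin_arccos]
      rw [show 1 - z.1 0 ^ 2 = z.1 1 ^ 2 by linarith, Real.sqrt_sq hz]

theorem JS.ends (z : JS.S1) (h : z.1 1 = 0) (s : ℝ) (hs : s ^ 2 = 1) :
    z = JS.arc s hs 0 ∨ z = JS.arc s hs 1 := by
  have hz := JS.S1_eq z
  rw [h] at hz
  have : z.1 0 = 1 ∨ z.1 0 = -1 := (fun h : z.1 0 ^ 2 = 1 => by simpa using h) (by linarith)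
  rcases this with h' | h'
  · left; apply JS.S1_ext <;> simp [JS.arc_0, JS.arc_1, h, h']
  · right; apply JS.S1_ext <;> simp [JS.arc_0, JS.arc_1, h, h']

theorem JS.curve_sep (C D : Set JS.S2) (e : C ≃ₜ JS.S1) (hD : IsClosed D) (hCD : Disjoint C D)
    (hK : (C ∪ D)ᶜ.Nonempty) : ¬ IsPreconnected (C ∪ D)ᶜ := by
  let j : C(JS.S1, JS.S2) := ⟨fun x => (e.symm x).1, by fun_prop⟩
  have hj : Function.Injective j := fun x y h => e.symm.injective (Subtype.ext h)
  have hjr : range j = C := by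
    have : range j = Subtype.val '' (range e.symm) := by rw [← range_comp]; rfl
    rw [this, e.symm.surjective.range_eq, image_univ, Subtype.range_coe]
  let A := JS.arc 1 (by norm_num)
  let A' := JS.arc (-1) (by norm_num)
  let B : Set JS.S2 := j '' {z | z.1 1 ≤ 0} ∪ D
  have hcl : IsClosed {z : JS.S1 | z.1 1 ≤ 0} := isClosed_le (by fun_prop) (by fun_prop)
  have hrange : range (j.comp A) ∪ B = C ∪ D := by
    have : range (j.comp A) = j '' {z | 0 ≤ z.1 1} := by
      rw [← JS.range_arc, ← range_comp]; rfl
    rw [this, ← union_assoc, ← image_union]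
    have : {z : JS.S1 | 0 ≤ z.1 1} ∪ {z | z.1 1 ≤ 0} = univ := by
      ext z; simpa using le_total _ _
    rw [this, image_univ, hjr]
  rw [← hrange] at hK ⊢
  refine JS.sphere_sep (j.comp A) (j.comp A') ?_ ?_ ?_ B ?_ ?_ ?_ hK
  · exact congrArg j (JS.S1_ext _ _ (by simp [A, A', JS.arc_0]) (by simp [A, A', JS.arc_1]))
  · exact congrArg j (JS.S1_ext _ _ (by simp [A, A', JS.arc_0]) (by simp [A, A', JS.arc_1]))
  · intro h
    have := congrArg (fun z : JS.S1 => z.1 0) (hj h)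
    simp [A, JS.arc_0] at this
    norm_num at this
  · exact (hcl.isCompact.image j.continuous).isClosed.union hD
  · rintro _ ⟨t, rfl⟩
    refine .inl ⟨A' t, ?_, rfl⟩
    simp only [mem_ofPred_eq, A', JS.arc_1]
    linarith [JS.sin_nonneg t]
  · rintro t (⟨z, hz, hzt⟩ | ht)
    · have hzA : z = A t := hj hzt
      have h1 : 0 ≤ (A t).1 1 := by
        simp only [A, JS.arc_1, one_mul]; exact JS.sin_nonneg t
      have h2 : (A t).1 1 = 0 := le_antisymm (hzA ▸ hz) h1
      rcases JS.ends _ h2 1 (by norm_num) with h | h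
      · exact .inl (congrArg j h)
      · exact .inr (congrArg j h)
    · exact absurd ht (hCD.notMem_of_mem_left (hjr ▸ ⟨A t, rfl⟩))

theorem JS.curve_ne_univ (C : Set JS.S2) (e : C ≃ₜ JS.S1) : Cᶜ.Nonempty := by
  by_contra hne
  have hC : C = univ := by simpa [not_nonempty_iff_eq_empty] using hne
  subst hC
  let k : JS.S2 → JS.S1 := fun z => e ⟨z, mem_univ z⟩
  have hk : Continuous k := by fun_prop
  have hki : Function.Injective k := fun x y h => congrArg Subtype.val (e.injective h)
  have hks : Function.Surjective k := fun w => ⟨(e.symm w).1, by simp [k]⟩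
  obtain ⟨p, hp⟩ := hks (JS.arc 1 (by norm_num) 0)
  obtain ⟨q, hq⟩ := hks (JS.arc 1 (by norm_num) 1)
  obtain ⟨m, hm⟩ := hks (JS.pt 1 (Real.pi / 2) (by norm_num))
  obtain ⟨n, hn⟩ := hks (JS.pt (-1) (Real.pi / 2) (by norm_num))
  have hm1 : (k m).1 1 = 1 := by simp [hm, JS.pt]
  have hn1 : (k n).1 1 = -1 := by simp [hn, JS.pt]
  have hp1 : (k p).1 1 = 0 := by simp [hp, JS.arc_1]
  have hq1 : (k q).1 1 = 0 := by simp [hq, JS.arc_1]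
  have hpq : p ≠ q := by
    rintro rfl
    have := congrArg (fun z : JS.S1 => z.1 0) (hp.symm.trans hq)
    simp [JS.arc_0] at this
    norm_num at this
  have hpre := (JS.connected_two p q hpq).image (fun z => (k z).1 1)
    (by fun_prop : Continuous fun z => (k z).1 1).continuousOn
  have hm2 : m ∈ ({p, q}ᶜ : Set JS.S2) := by
    rintro (rfl | h)
    · linarith
    · rw [mem_singleton_iff] at h; subst h; linarith
  have hn2 : n ∈ ({p, q}ᶜ : Set JS.S2) := by
    rintro (rfl | h)
    · linarith
    · rw [mem_singleton_iff] at h; subst h; linarith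
  obtain ⟨z, hz, hz0⟩ := hpre.Icc_subset ⟨n, hn2, hn1⟩ ⟨m, hm2, hm1⟩
    (show (0 : ℝ) ∈ Icc (-1) 1 by norm_num)
  rcases JS.ends _ hz0 1 (by norm_num) with h | h
  · exact hz (.inl (hki (h.trans hp.symm)))
  · exact hz (.inr (hki (h.trans hq.symm)))

/-- the genus of the 2-sphere `S²` is `0`; every subset of `S²` homeomorphic to the
circle `S¹` has disconnected complement. -/
theorem genus_sphere_eq_zero :
    genus ↥(Metric.sphere (0 : EuclideanSpace ℝ (Fin 3)) 1) = 0 ∧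
    ∀ C : Set ↥(Metric.sphere (0 : EuclideanSpace ℝ (Fin 3)) 1),
      Nonempty (↥C ≃ₜ ↥(Metric.sphere (0 : EuclideanSpace ℝ (Fin 2)) 1)) →
      ¬ IsPreconnected Cᶜ := by
  constructor
  · unfold genus
    refine Nat.le_zero.mp (csSup_le' ?_)
    rintro m ⟨C, hdis, hC, hconn⟩
    rw [Nat.le_zero]
    by_contra hm
    obtain ⟨m, rfl⟩ := Nat.exists_eq_succ_of_ne_zero hm
    have hU : (⋃ i, C i) = C 0 ∪ ⋃ i : Fin m, C i.succ := by
      ext z; simp [Fin.exists_fin_succ]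
    have hcl : ∀ i, IsClosed (C i) := fun i => by
      obtain ⟨e⟩ := hC i
      have : CompactSpace (C i) := e.symm.compactSpace
      exact (isCompact_iff_compactSpace.mpr this).isClosed
    rw [hU] at hconn
    obtain ⟨e⟩ := hC 0
    refine JS.curve_sep (C 0) _ e (isClosed_iUnion_of_finite fun i => hcl _) ?_
      hconn.nonempty hconn.isPreconnected
    rw [disjoint_iUnion_right]
    exact fun i => hdis (Fin.succ_ne_zero i).symm
  · rintro C ⟨e⟩ h
    have := JS.curve_sep C ∅ e isClosed_empty (disjoint_empty _)
    rw [union_empty] at this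
    exact this (JS.curve_ne_univ C e) h
end

section
/- The genus of the torus T² = (ℝ/ℤ) × (ℝ/ℤ) is 1; that is, there exists a subset C ⊆ T² homeomorphic to the circle S¹ with T² \ C connected, and for any two disjoint subsets C₁, C₂ ⊆ T² each homeomorphic to S¹, the complement T² \ (C₁ ∪ C₂) is disconnected. -/
open Complex in
/-- `t ↦ e^{2πit}` -/
noncomputable def ee (t : ℝ) : ℂ := Complex.exp (2 * Real.pi * t * Complex.I)

theorem ee_add (s t : ℝ) : ee (s + t) = ee s * ee t := by
  unfold ee; rw [← Complex.exp_add]; congr 1; push_cast; ring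

theorem ee_int (n : ℤ) : ee n = 1 := by
  unfold ee; rw [Complex.exp_eq_one_iff]; exact ⟨n, by push_cast; ring⟩

theorem ee_zero : ee 0 = 1 := by simp [ee]

theorem ee_ne (t : ℝ) : ee t ≠ 0 := Complex.exp_ne_zero _

theorem ee_cont : Continuous ee := by unfold ee; fun_prop

theorem ee_neg (t : ℝ) : ee (-t) = (ee t)⁻¹ := by
  unfold ee; rw [← Complex.exp_neg]; congr 1; push_cast; ring

theorem ee_norm (t : ℝ) : ‖ee t‖ = 1 := by
  have : ee t = Complex.exp ((2 * Real.pi * t : ℝ) * Complex.I) := by unfold ee; push_cast; rfl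
  rw [this, Complex.norm_exp_ofReal_mul_I]

theorem ee_eq_one {t : ℝ} (h : ee t = 1) : ∃ n : ℤ, t = n := by
  unfold ee at h
  rw [Complex.exp_eq_one_iff] at h
  obtain ⟨n, hn⟩ := h
  refine ⟨n, ?_⟩
  have h2 : (2 * Real.pi * Complex.I : ℂ) ≠ 0 := Complex.two_pi_I_ne_zero
  have : (2 * Real.pi * Complex.I : ℂ) * t = (2 * Real.pi * Complex.I : ℂ) * n := by
    rw [mul_comm _ (n : ℂ), ← hn]; ring
  exact_mod_cast mul_left_cancel₀ h2 this

theorem ee_half : ee (1 / 2) = -1 := by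
  unfold ee
  rw [← Complex.exp_pi_mul_I]; congr 1; push_cast; ring

/-- basic kernel -/
noncomputable def kk (x t : ℝ) : ℂ := ee (x * t) * ((1 - t : ℝ) + (t : ℝ) * ee (-x))

/-- a quasi periodic function with zeros at half integers -/
noncomputable def ss (z : ℝ × ℝ) : ℂ := ee (-(z.1 * z.2)) * kk z.1 (Int.fract z.2)

theorem ss_cont : Continuous ss := by
  unfold ss
  refine (ee_cont.comp (by fun_prop)).mul ?_
  refine ContinuousOn.comp_fract (f := fun (z : ℝ × ℝ) t => kk z.1 t) (s := Prod.snd) ?_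
    continuous_snd ?_
  · apply Continuous.continuousOn
    unfold Function.uncurry kk
    refine (ee_cont.comp (by fun_prop)).mul ?_
    refine Continuous.add (by fun_prop) (Continuous.mul (by fun_prop) (ee_cont.comp (by fun_prop)))
  · intro z
    simp [kk, ee_zero, ← ee_add]

theorem ss_int (x y : ℝ) (m n : ℤ) : ss (x + m, y + n) = ee (-(n * x)) * ss (x, y) := by
  unfold ss kk
  simp only [Int.fract_add_intCast]
  have h1 : ee (-(x + m)) = ee (-x) := by
    rw [show -(x + (m : ℝ)) = -x + ((-m : ℤ) : ℝ) by push_cast; ring, ee_add, ee_int, mul_one]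
  rw [h1, ← mul_assoc, ← mul_assoc, ← mul_assoc, ← ee_add, ← ee_add, ← ee_add]
  congr 1
  have : -((x + m) * (y + n)) + (x + m) * Int.fract y =
    (-(n * x) + -(x * y) + x * Int.fract y) + ((-m * ⌊y⌋ - m * n : ℤ) : ℝ) := by
    have := Int.floor_add_fract y
    have h : (⌊y⌋ : ℝ) = y - Int.fract y := by linarith
    push_cast
    rw [h]; ring
  rw [this, ee_add _ ((_ : ℤ) : ℝ), ee_int, mul_one]

theorem ss_zero (x y : ℝ) (h : ss (x, y) = 0) : ∃ m n : ℤ, x = m + 1 / 2 ∧ y = n + 1 / 2 := by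
  unfold ss kk at h
  simp only [mul_eq_zero, ee_ne, false_or] at h
  set t := Int.fract y with ht
  have h0 : 0 ≤ t := Int.fract_nonneg y
  have h1 : t < 1 := Int.fract_lt_one y
  have h2 : (((1 - t : ℝ)) : ℂ) = - (t * ee (-x)) := by linear_combination h
  have h3 := congrArg norm h2
  rw [norm_neg, norm_mul, ee_norm, Complex.norm_real, Complex.norm_real, Real.norm_eq_abs,
    Real.norm_eq_abs, abs_of_nonneg h0, abs_of_nonneg (by linarith), mul_one] at h3
  have h4 : t = 1 / 2 := by linarith
  have h5 : ee (-x) = -1 := by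
    rw [h4] at h2; push_cast at h2
    linear_combination 2 * h2
  have h6 : ee (-x + 1 / 2) = 1 := by rw [ee_add, h5, ee_half]; ring
  obtain ⟨n, hn⟩ := ee_eq_one h6
  refine ⟨-n, ⌊y⌋, by push_cast; linarith, ?_⟩
  have := Int.floor_add_fract y
  linarith

/-- shifted: zeros at lattice points -/
noncomputable def sg (z : ℝ × ℝ) : ℂ := ss (z.1 + 1 / 2, z.2 + 1 / 2)

theorem sg_cont : Continuous sg := ss_cont.comp (by fun_prop)

theorem sg_int (x y : ℝ) (m n : ℤ) :
    sg (x + m, y + n) = ee (-(n * (x + 1 / 2))) * sg (x, y) := by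
  unfold sg
  rw [← ss_int _ _ m]; congr 2 <;> simp only <;> ring

theorem sg_zero (x y : ℝ) (h : sg (x, y) = 0) : ∃ m n : ℤ, x = m ∧ y = n := by
  obtain ⟨m, n, h1, h2⟩ := ss_zero _ _ h
  exact ⟨m, n, by linarith, by linarith⟩

/-- A local section of `sg` near zero. -/
theorem sg_section : ∃ φ : ℂ → ℝ × ℝ, ContinuousAt φ 0 ∧ φ 0 = 0 ∧
    (∀ᶠ w in nhds 0, ContinuousAt φ w) ∧ ∀ᶠ w in nhds 0, sg (φ w) = w := by
  let v : ℂ → ℝ := fun w => ((1 / 2 - w.re) ^ 2 + w.im ^ 2 - 1 / 4) / (2 - 2 * w.re)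
  let N : ℂ → ℂ := fun w => (1 / 2 - (v w : ℂ) - w) / (1 / 2 + (v w : ℂ))
  let φ : ℂ → ℝ × ℝ := fun w => (-(Complex.arg (N w)) / (2 * Real.pi), v w)
  have v0 : v 0 = 0 := by simp [v]; norm_num
  have hv : ∀ᶠ w in nhds (0 : ℂ), ContinuousAt v w := by
    have : ∀ᶠ w : ℂ in nhds 0, (2 - 2 * w.re) ≠ 0 := by
      apply ContinuousAt.eventually_ne (by fun_prop); simp
    filter_upwards [this] with w hw
    have : ContinuousAt Complex.re w := Complex.continuous_re.continuousAt
    have : ContinuousAt Complex.im w := Complex.continuous_im.continuousAt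
    apply ContinuousAt.div <;> first | fun_prop | assumption
  have hv0 := hv.self_of_nhds
  have hvs : ∀ᶠ w in nhds (0 : ℂ), |v w| < 1 / 2 := by
    have : ContinuousAt (fun w => |v w|) 0 := hv0.abs
    exact this.eventually_lt_const (by simp [v0])
  have hN : ∀ᶠ w in nhds (0 : ℂ), ContinuousAt N w := by
    filter_upwards [hv, hvs] with w hw h2
    have hw' : ContinuousAt (fun w => (v w : ℂ)) w := Complex.continuous_ofReal.continuousAt.comp hw
    apply ContinuousAt.div (by fun_prop) (by fun_prop)
    rw [abs_lt] at h2
    have : (1 / 2 + v w : ℝ) ≠ 0 := by linarith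
    have := Complex.ofReal_ne_zero.2 this
    push_cast at this
    exact this
  have N0 : N 0 = 1 := by simp [N, v0]
  have hNs : ∀ᶠ w in nhds (0 : ℂ), N w ∈ Complex.slitPlane := by
    apply hN.self_of_nhds.eventually_mem
    rw [N0]; exact Complex.isOpen_slitPlane.mem_nhds (by simp)
  have hφ : ∀ᶠ w in nhds (0 : ℂ), ContinuousAt φ w := by
    filter_upwards [hv, hN, hNs] with w h1 h2 h3
    apply ContinuousAt.prodMk _ h1
    have := (Complex.continuousAt_arg h3).comp h2
    have h4 : ContinuousAt (fun w => Complex.arg (N w)) w := this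
    fun_prop
  refine ⟨φ, hφ.self_of_nhds, by simp [φ, N0, v0], hφ, ?_⟩
  have hre : ∀ᶠ w : ℂ in nhds 0, w.re < 1 :=
    Complex.continuous_re.continuousAt.eventually_lt_const (by simp)
  filter_upwards [hvs, hNs, hre] with w h1 h2 h3
  rw [abs_lt] at h1
  have hf : Int.fract (v w + 1 / 2) = v w + 1 / 2 :=
    Int.fract_eq_self.2 ⟨by linarith, by linarith⟩
  have hn : ‖N w‖ = 1 := by
    simp only [N]
    have e1 : (1 / 2 + (v w : ℂ)) = ((1 / 2 + v w : ℝ) : ℂ) := by push_cast; rfl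
    rw [norm_div, e1, Complex.norm_real, Real.norm_eq_abs, abs_of_pos (by linarith),
      div_eq_one_iff_eq (by linarith)]
    have : ‖1 / 2 - (v w : ℂ) - w‖ ^ 2 = (1 / 2 + v w) ^ 2 := by
      rw [Complex.sq_norm, Complex.normSq_apply]
      simp only [Complex.sub_re, Complex.sub_im, Complex.ofReal_re, Complex.ofReal_im]
      norm_num
      have : v w * (2 - 2 * w.re) = ((1 / 2 - w.re) ^ 2 + w.im ^ 2 - 1 / 4) :=
        div_mul_cancel₀ _ (by linarith)
      linear_combination -this
    exact (sq_eq_sq₀ (norm_nonneg _) (by linarith)).1 this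
  have hE : ee (-((-(Complex.arg (N w)) / (2 * Real.pi)) + 1 / 2)) = - N w := by
    rw [neg_add, ee_add, ee_neg (1 / 2), ee_half]
    have : ee (-(-(Complex.arg (N w)) / (2 * Real.pi))) = N w := by
      conv_rhs => rw [← Complex.norm_mul_exp_arg_mul_I (N w), hn]
      unfold ee
      have : (Real.pi : ℂ) ≠ 0 := by exact_mod_cast Real.pi_ne_zero
      push_cast
      rw [one_mul]; congr 1; field_simp
    rw [this]; norm_num
  simp only [sg, ss, kk, φ, hf]
  rw [← mul_assoc, ← ee_add, neg_add_cancel, ee_zero, one_mul, hE]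
  simp only [N]
  have : (1 / 2 + (v w : ℂ)) ≠ 0 := by
    have : (1 / 2 + v w : ℝ) ≠ 0 := by linarith
    have := Complex.ofReal_ne_zero.2 this
    push_cast at this
    exact this
  have hc := div_mul_cancel₀ (1 / 2 - (v w : ℂ) - w) this
  push_cast
  linear_combination -hc

/-- `f` has a continuous logarithm on `U` -/
def HasLog {X : Type*} [TopologicalSpace X] (f : X → ℂ) (U : Set X) : Prop :=
  ∃ g : X → ℂ, ContinuousOn g U ∧ ∀ z ∈ U, f z = Complex.exp (g z)

section
variable {X Y : Type*} [TopologicalSpace X] [TopologicalSpace Y]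

theorem HasLog.mono {f : X → ℂ} {U V : Set X} (h : HasLog f U) (hV : V ⊆ U) : HasLog f V := by
  obtain ⟨g, h1, h2⟩ := h
  exact ⟨g, h1.mono hV, fun z hz => h2 z (hV hz)⟩

theorem HasLog.congr {f f' : X → ℂ} {U : Set X} (h : HasLog f U) (hV : ∀ z ∈ U, f' z = f z) :
    HasLog f' U := by
  obtain ⟨g, h1, h2⟩ := h
  exact ⟨g, h1, fun z hz => (hV z hz).trans (h2 z hz)⟩

theorem HasLog.mul {f f' : X → ℂ} {U : Set X} (h : HasLog f U) (h' : HasLog f' U) :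
    HasLog (fun z => f z * f' z) U := by
  obtain ⟨g, h1, h2⟩ := h
  obtain ⟨g', h1', h2'⟩ := h'
  exact ⟨fun z => g z + g' z, h1.add h1', fun z hz => by
    simp only [Complex.exp_add, h2 z hz, h2' z hz]⟩

theorem HasLog.zpow {f : X → ℂ} {U : Set X} (h : HasLog f U) (n : ℤ) :
    HasLog (fun z => f z ^ n) U := by
  obtain ⟨g, h1, h2⟩ := h
  exact ⟨fun z => n * g z, continuousOn_const.mul h1, fun z hz => by
    simp only [Complex.exp_int_mul, h2 z hz]⟩

theorem HasLog.inv {f : X → ℂ} {U : Set X} (h : HasLog f U) :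
    HasLog (fun z => (f z)⁻¹) U := by
  simpa using h.zpow (-1)

theorem HasLog.const {c : ℂ} (hc : c ≠ 0) (U : Set X) : HasLog (fun _ => c) U :=
  ⟨fun _ => Complex.log c, continuousOn_const, fun _ _ => (Complex.exp_log hc).symm⟩

theorem HasLog.comp {f : X → ℂ} {U : Set X} (h : HasLog f U) {φ : Y → X} {V : Set Y}
    (hφ : ContinuousOn φ V) (hm : Set.MapsTo φ V U) : HasLog (fun y => f (φ y)) V := by
  obtain ⟨g, h1, h2⟩ := h
  exact ⟨fun y => g (φ y), h1.comp hφ hm, fun y hy => h2 _ (hm hy)⟩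

theorem log_const {S : Set X} (hS : IsPreconnected S) {D : X → ℂ} (hD : ContinuousOn D S)
    (h : ∀ x ∈ S, Complex.exp (D x) = 1) {x y : X} (hx : x ∈ S) (hy : y ∈ S) : D x = D y := by
  refine Complex.isCoveringMap_exp.constOn_of_comp hS hD ?_ hx hy
  intro a ha b hb
  simp [h a ha, h b hb]

theorem HasLog.local {f : X → ℂ} {p : X} (h : ∀ᶠ z in nhds p, ContinuousAt f z) (h0 : f p ≠ 0) :
    ∃ W ∈ nhds p, HasLog f W := by
  have h1 : ∀ᶠ z in nhds p, f z / f p ∈ Complex.slitPlane := by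
    have : ContinuousAt (fun z => f z / f p) p := h.self_of_nhds.div_const _
    apply this.eventually_mem
    rw [div_self h0]; exact Complex.isOpen_slitPlane.mem_nhds (by simp)
  refine ⟨{z | ContinuousAt f z ∧ f z / f p ∈ Complex.slitPlane}, h.and h1,
    fun z => Complex.log (f z / f p) + Complex.log (f p), ?_, ?_⟩
  · rintro z ⟨hz1, hz2⟩
    apply ContinuousAt.continuousWithinAt
    have : ContinuousAt (fun z => f z / f p) z := hz1.div_const _
    exact (this.clog hz2).add continuousAt_const
  · rintro z ⟨hz1, hz2⟩
    rw [Complex.exp_add, Complex.exp_log h0, Complex.exp_log (Complex.slitPlane_ne_zero hz2),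
      div_mul_cancel₀ _ h0]

/-- homotopy lifting -/
theorem HasLog.homotopy {U : Set X} (H : ℝ → X → ℂ)
    (hc : ∀ t ∈ Set.Icc (0 : ℝ) 1, ∀ z ∈ U, ContinuousAt (Function.uncurry H) (t, z))
    (hn : ∀ t ∈ Set.Icc (0 : ℝ) 1, ∀ z ∈ U, H t z ≠ 0) (h0 : ∀ z ∈ U, H 0 z = 1) :
    HasLog (H 1) U := by
  classical
  let HH : C(unitInterval × U, {z : ℂ // z ≠ 0}) :=
    ⟨fun a => ⟨H a.1 a.2, hn _ a.1.2 _ a.2.2⟩, by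
      apply Continuous.subtype_mk
      rw [continuous_iff_continuousAt]
      rintro ⟨t, z⟩
      have h1 := hc t t.2 z z.2
      have h2 : ContinuousAt (fun a : unitInterval × U => ((a.1 : ℝ), (a.2 : X))) (t, z) := by
        fun_prop
      exact ContinuousAt.comp (f := fun a : unitInterval × U => ((a.1 : ℝ), (a.2 : X)))
        (x := (t, z)) h1 h2⟩
  let f0 : C(U, ℂ) := ContinuousMap.const _ 0
  have H0 : ∀ a, HH (0, a) = (⟨_, Complex.exp_ne_zero (f0 a)⟩ : {z : ℂ // z ≠ 0}) := by
    intro a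
    apply Subtype.ext
    simp [HH, f0, h0 a a.2]
  let L := Complex.isCoveringMap_exp.liftHomotopy HH f0 H0
  have hL := Complex.isCoveringMap_exp.liftHomotopy_lifts HH f0 H0
  refine ⟨fun z => if hz : z ∈ U then L (1, ⟨z, hz⟩) else 0, ?_, ?_⟩
  · rw [continuousOn_iff_continuous_domRestrict]
    have : Continuous fun z : U => L (1, z) := by fun_prop
    convert! this using 1
    ext z
    simp
  · intro z hz
    have := congrArg Subtype.val (congrFun hL (1, ⟨z, hz⟩))
    simp only [hz, dif_pos]
    exact this.symm

/-- gluing logs -/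
theorem HasLog.glue {f : X → ℂ} {U V : Set X} (hU : IsOpen U) (hV : IsOpen V)
    (h1 : HasLog f U) (h2 : HasLog f V) (hc : IsPreconnected (U ∩ V)) : HasLog f (U ∪ V) := by
  classical
  obtain ⟨g, g1, g2⟩ := h1
  obtain ⟨h, h1, h2⟩ := h2
  have key : ∃ c : ℂ, Complex.exp c = 1 ∧ ∀ z ∈ U ∩ V, g z = h z + c := by
    have hd : ∀ z ∈ U ∩ V, Complex.exp (g z - h z) = 1 := by
      intro z hz
      rw [Complex.exp_sub, ← g2 z hz.1, ← h2 z hz.2, div_self]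
      rw [g2 z hz.1]; exact Complex.exp_ne_zero _
    rcases (U ∩ V).eq_empty_or_nonempty with he | ⟨z0, hz0⟩
    · exact ⟨0, by simp, by simp [he]⟩
    · refine ⟨g z0 - h z0, hd z0 hz0, fun z hz => ?_⟩
      have := log_const (D := fun z => g z - h z) hc
        ((g1.mono Set.inter_subset_left).sub (h1.mono Set.inter_subset_right)) hd hz hz0
      linear_combination this
  obtain ⟨c, hc1, hc2⟩ := key
  refine ⟨fun z => if z ∈ U then g z else h z + c, ?_, ?_⟩
  · rintro z (hz | hz)
    · apply ContinuousAt.continuousWithinAt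
      refine (g1.continuousAt (hU.mem_nhds hz)).congr ?_
      filter_upwards [hU.mem_nhds hz] with w hw
      simp [hw]
    · apply ContinuousAt.continuousWithinAt
      refine ((h1.continuousAt (hV.mem_nhds hz)).add (continuousAt_const (y := c))).congr ?_
      filter_upwards [hV.mem_nhds hz] with w hw
      split_ifs with hw'
      · exact (hc2 w ⟨hw', hw⟩).symm
      · rfl
  · intro z hz
    by_cases hzU : z ∈ U
    · simp [hzU, g2 z hzU]
    · have hzV : z ∈ V := hz.resolve_left hzU
      simp [hzU, Complex.exp_add, hc1, h2 z hzV]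

end

theorem no_log {p : ℝ × ℝ} {m : ℤ} (hm : m ≠ 0) {W : Set (ℝ × ℝ)} (hW : W ∈ nhds p)
    (h : HasLog (fun z => sg (z - p) ^ m) (W \ {p})) : False := by
  obtain ⟨g, g1, g2⟩ := h
  obtain ⟨φ, c0, φ0, hc, hs⟩ := sg_section
  have hW' : ∀ᶠ w in nhds (0 : ℂ), φ w + p ∈ W := by
    have : ContinuousAt (fun w => φ w + p) 0 := c0.add continuousAt_const
    apply this.eventually_mem
    rw [φ0, zero_add]; exact hW
  have sg0 : sg 0 = 0 := by have := hs.self_of_nhds; rwa [φ0] at this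
  obtain ⟨ε, hε, hb⟩ := Metric.eventually_nhds_iff_ball.1 (hc.and (hs.and hW'))
  set ρ := ε / 2 with hρ
  have ρpos : 0 < ρ := by positivity
  let c : ℝ → ℂ := fun t => ρ * ee t
  have cc : Continuous c := continuous_const.mul ee_cont
  have cb : ∀ t, c t ∈ Metric.ball (0 : ℂ) ε := by
    intro t
    simp only [c, Metric.mem_ball, dist_zero_right, norm_mul, ee_norm, Complex.norm_real,
      Real.norm_eq_abs, abs_of_pos ρpos]
    linarith
  have c0 : ∀ t, c t ≠ 0 := fun t => mul_ne_zero (by exact_mod_cast ρpos.ne') (ee_ne t)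
  have hf : Continuous fun t => φ (c t) + p := by
    rw [continuous_iff_continuousAt]
    intro t
    have := ContinuousAt.comp (f := c) (x := t) (hb _ (cb t)).1 cc.continuousAt
    exact this.add continuousAt_const
  have hmem : ∀ t, φ (c t) + p ∈ W \ {p} := by
    intro t
    refine ⟨(hb _ (cb t)).2.2, ?_⟩
    intro h
    have h : φ (c t) = 0 := by simpa using h
    have h2 := (hb _ (cb t)).2.1
    rw [h, sg0] at h2
    exact c0 t h2.symm
  have hG : Continuous fun t => g (φ (c t) + p) := g1.comp_continuous hf hmem
  let D : ℝ → ℂ := fun t => g (φ (c t) + p) - m * (Complex.log ρ + 2 * Real.pi * t * Complex.I)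
  have hD : Continuous D := by
    apply hG.sub; fun_prop
  have hD1 : ∀ t ∈ (Set.univ : Set ℝ), Complex.exp (D t) = 1 := by
    intro t _
    have h1 : sg (φ (c t) + p - p) ^ m = _ := g2 _ (hmem t)
    rw [add_sub_cancel_right, (hb _ (cb t)).2.1] at h1
    simp only [D]
    rw [Complex.exp_sub, ← h1, Complex.exp_int_mul, Complex.exp_add, Complex.exp_log
      (by exact_mod_cast ρpos.ne')]
    exact div_self (zpow_ne_zero _ (c0 t))
  have := log_const isPreconnected_univ hD.continuousOn hD1 (Set.mem_univ 0) (Set.mem_univ 1)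
  have h01 : c 0 = c 1 := by
    have := ee_int 1
    simp only [c, ee_zero]; rw [← this]; simp
  simp only [D, h01] at this
  have : (m : ℂ) * (2 * Real.pi * Complex.I) = 0 := by
    push_cast at this
    linear_combination this
  rcases mul_eq_zero.1 this with h | h
  · exact hm (by exact_mod_cast h)
  · exact Complex.two_pi_I_ne_zero h

/-- the torus -/
abbrev TT := AddCircle (1 : ℝ) × AddCircle (1 : ℝ)

/-- the covering of the torus by the plane -/
def EE (z : ℝ × ℝ) : TT := ((z.1 : AddCircle (1 : ℝ)), (z.2 : AddCircle (1 : ℝ)))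

theorem EE_quot : IsOpenQuotientMap EE :=
  (QuotientAddGroup.isOpenQuotientMap_mk (N := AddSubgroup.zmultiples (1 : ℝ))).prodMap
    (QuotientAddGroup.isOpenQuotientMap_mk (N := AddSubgroup.zmultiples (1 : ℝ)))

theorem EE_cont : Continuous EE := EE_quot.continuous

theorem coe_eq_int {x y : ℝ} (h : (x : AddCircle (1 : ℝ)) = y) : ∃ n : ℤ, y = x + n := by
  have : ((y - x : ℝ) : AddCircle (1 : ℝ)) = 0 := by
    rw [AddCircle.coe_sub, h, sub_self]
  obtain ⟨n, hn⟩ := (AddCircle.coe_eq_zero_iff (1 : ℝ)).1 this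
  exact ⟨n, by simp at hn; linarith⟩

theorem coe_add_int (x : ℝ) (n : ℤ) : ((x + n : ℝ) : AddCircle (1 : ℝ)) = x := by
  rw [AddCircle.coe_add]
  have : ((n : ℝ) : AddCircle (1 : ℝ)) = 0 :=
    (AddCircle.coe_eq_zero_iff (1 : ℝ)).2 ⟨n, by simp⟩
  rw [this, add_zero]

theorem EE_add_int (z : ℝ × ℝ) (m n : ℤ) : EE (z.1 + m, z.2 + n) = EE z := by
  simp only [EE, coe_add_int]

theorem EE_eq {z w : ℝ × ℝ} (h : EE z = EE w) : ∃ m n : ℤ, w = (z.1 + m, z.2 + n) := by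
  obtain ⟨m, hm⟩ := coe_eq_int (congrArg Prod.fst h)
  obtain ⟨n, hn⟩ := coe_eq_int (congrArg Prod.snd h)
  exact ⟨m, n, Prod.ext hm hn⟩

theorem sg_sub_ne {z p : ℝ × ℝ} (h : EE z ≠ EE p) : sg (z - p) ≠ 0 := by
  intro h0
  obtain ⟨m, n, h1, h2⟩ := sg_zero (z - p).1 (z - p).2 h0
  apply h
  rw [← EE_add_int p m n, ← h1, ← h2]
  congr 1; ext <;> simp

/-- difference function upstairs -/
noncomputable def ft (p q z : ℝ × ℝ) : ℂ :=
  sg (z - p) / sg (z - q) * ee (-((p.1 - q.1) * z.2))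

theorem ft_per (p q z : ℝ × ℝ) (m n : ℤ) : ft p q (z.1 + m, z.2 + n) = ft p q z := by
  have h : ∀ r : ℝ × ℝ, sg ((z.1 + m, z.2 + n) - r) =
      ee (-(n * (z.1 - r.1 + 1 / 2))) * sg (z - r) := by
    intro r
    have := sg_int (z.1 - r.1) (z.2 - r.2) m n
    have e : ((z.1 + (m : ℝ), z.2 + (n : ℝ)) - r) = (z.1 - r.1 + m, z.2 - r.2 + n) := by
      ext <;> simp <;> ring
    rw [e, this]; rfl
  unfold ft
  rw [h p, h q, mul_div_mul_comm]
  have : ee (-(n * (z.1 - p.1 + 1 / 2))) / ee (-(n * (z.1 - q.1 + 1 / 2))) =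
      ee (n * (p.1 - q.1)) := by
    rw [div_eq_mul_inv, ← ee_neg, ← ee_add]; congr 1; ring
  rw [this]
  have : ee (-((p.1 - q.1) * (z.2 + n))) = ee (-((p.1 - q.1) * z.2)) * (ee (n * (p.1 - q.1)))⁻¹ := by
    rw [← ee_neg, ← ee_add]; congr 1; ring
  simp only [this]
  have := ee_ne (n * (p.1 - q.1))
  field_simp

/-- difference function on the torus -/
noncomputable def fT (p q : ℝ × ℝ) (z : TT) : ℂ := ft p q (Function.surjInv EE_quot.surjective z)

theorem fT_EE (p q z : ℝ × ℝ) : fT p q (EE z) = ft p q z := by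
  have h := Function.surjInv_eq EE_quot.surjective (EE z)
  obtain ⟨m, n, hmn⟩ := EE_eq h
  unfold fT
  rw [← ft_per p q _ m n, ← hmn]

theorem fT_ne {p q : ℝ × ℝ} {z : TT} (hp : z ≠ EE p) (hq : z ≠ EE q) : fT p q z ≠ 0 := by
  obtain ⟨w, rfl⟩ := EE_quot.surjective z
  rw [fT_EE]
  exact mul_ne_zero (div_ne_zero (sg_sub_ne hp) (sg_sub_ne hq)) (ee_ne _)

theorem fT_self {q : ℝ × ℝ} {z : TT} (hq : z ≠ EE q) : fT q q z = 1 := by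
  obtain ⟨w, rfl⟩ := EE_quot.surjective z
  rw [fT_EE]
  simp [ft, ee_zero, sg_sub_ne hq]

theorem fT_mul {p q r : ℝ × ℝ} {z : TT} (hq : z ≠ EE q) : fT p q z * fT q r z = fT p r z := by
  obtain ⟨w, rfl⟩ := EE_quot.surjective z
  simp only [fT_EE, ft]
  have h := sg_sub_ne hq
  have : ee (-((p.1 - r.1) * w.2)) = ee (-((p.1 - q.1) * w.2)) * ee (-((q.1 - r.1) * w.2)) := by
    rw [← ee_add]; congr 1; ring
  rw [this]
  field_simp

theorem fT_char {q w : ℝ × ℝ} (m n : ℤ) (hq : EE w ≠ EE q) :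
    fT (q.1 + m, q.2 + n) q (EE w) = ee (n * (1 / 2 - q.1)) * ee (n * w.1 - m * w.2) := by
  rw [fT_EE]; unfold ft
  have h := sg_sub_ne hq
  have h2 : sg (w - (q.1 + m, q.2 + n)) = ee (n * (w.1 - q.1 + 1 / 2)) * sg (w - q) := by
    have := sg_int (w.1 - q.1) (w.2 - q.2) (-m) (-n)
    have e : (w - (q.1 + (m : ℝ), q.2 + (n : ℝ))) =
        (w.1 - q.1 + ((-m : ℤ) : ℝ), w.2 - q.2 + ((-n : ℤ) : ℝ)) := by
      ext <;> simp <;> ring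
    rw [e, this]
    have : ∀ x : ℝ, (-(((-n : ℤ) : ℝ) * x)) = n * x := by intro x; push_cast; ring
    rw [this]; rfl
  rw [h2, mul_div_assoc, div_self h, mul_one, ← ee_add, ← ee_add]
  congr 1; simp only; ring

theorem ft_contAt {p q z : ℝ × ℝ} (hq : EE z ≠ EE q) :
    ContinuousAt (fun a : (ℝ × ℝ) × (ℝ × ℝ) => ft a.1 q a.2) (p, z) := by
  unfold ft
  have h1 : Continuous fun a : (ℝ × ℝ) × (ℝ × ℝ) => sg (a.2 - a.1) := sg_cont.comp (by fun_prop)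
  have h2 : Continuous fun a : (ℝ × ℝ) × (ℝ × ℝ) => sg (a.2 - q) := sg_cont.comp (by fun_prop)
  have h3 : Continuous fun a : (ℝ × ℝ) × (ℝ × ℝ) => ee (-((a.1.1 - q.1) * a.2.2)) :=
    ee_cont.comp (by fun_prop)
  exact (h1.continuousAt.div h2.continuousAt (sg_sub_ne hq)).mul h3.continuousAt

theorem arc_log {c : ℝ → ℝ × ℝ} (hc : Continuous c) {α β : ℝ} (hαβ : α ≤ β) :
    HasLog (fT (c β) (c α)) ((fun t => EE (c t)) '' Set.Icc α β)ᶜ := by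
  have hmem : ∀ t ∈ Set.Icc (0 : ℝ) 1, α + t * (β - α) ∈ Set.Icc α β := by
    rintro t ⟨h0, h1⟩
    constructor <;> nlinarith
  have hne : ∀ t ∈ Set.Icc (0 : ℝ) 1, ∀ z ∈ ((fun t => EE (c t)) '' Set.Icc α β)ᶜ,
      z ≠ EE (c (α + t * (β - α))) := by
    rintro t ht z hz rfl
    exact hz ⟨_, hmem t ht, rfl⟩
  have hne0 : ∀ z ∈ ((fun t => EE (c t)) '' Set.Icc α β)ᶜ, z ≠ EE (c α) := by
    intro z hz
    have := hne 0 (by simp) z hz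
    simpa using this
  have := HasLog.homotopy (U := ((fun t => EE (c t)) '' Set.Icc α β)ᶜ)
    (fun t z => fT (c (α + t * (β - α))) (c α) z) ?_ ?_ ?_
  · convert this using 2
    simp
  · intro t ht z hz
    obtain ⟨w, rfl⟩ := EE_quot.surjective z
    have hq := IsOpenQuotientMap.prodMap (IsOpenQuotientMap.id (X := ℝ)) EE_quot
    have := hq.continuousAt_comp_iff (x := (t, w))
      (g := Function.uncurry (fun t z => fT (c (α + t * (β - α))) (c α) z))
    refine this.1 ?_
    have e : (Function.uncurry (fun t z => fT (c (α + t * (β - α))) (c α) z)) ∘ Prod.map id EE =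
      (fun a : (ℝ × ℝ) × (ℝ × ℝ) => ft a.1 (c α) a.2) ∘
        (fun b : ℝ × (ℝ × ℝ) => (c (α + b.1 * (β - α)), b.2)) := by
      ext ⟨b1, b2⟩
      simp [Function.uncurry, fT_EE]
    rw [e]
    refine ContinuousAt.comp (ft_contAt (hne0 _ hz)) ?_
    apply Continuous.continuousAt
    fun_prop
  · intro t ht z hz
    exact fT_ne (hne t ht z hz) (hne0 z hz)
  · intro z hz
    simpa using fT_self (hne0 z hz)

/-- data extracted from an embedded circle -/
structure Curve (C : Set TT) where
  p : ℝ × ℝ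
  q : ℝ × ℝ
  m : ℤ
  n : ℤ
  A : Set TT
  B : Set TT
  hA : IsClosed A
  hB : IsClosed B
  hAB : A ∪ B = C
  hinter : A ∩ B ⊆ {EE p, EE q}
  hpA : EE p ∈ A
  hpB : EE p ∈ B
  hqA : EE q ∈ A
  hqB : EE q ∈ B
  hpq : EE p ≠ EE q
  logA : HasLog (fT p q) Aᶜ
  logB : HasLog (fT (q.1 + m, q.2 + n) p) Bᶜ
  c : ℝ → ℝ × ℝ
  hc : Continuous c
  hcC : ∀ t ∈ Set.Icc (0 : ℝ) 1, EE (c t) ∈ C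
  hc1 : c 1 = ((c 0).1 + m, (c 0).2 + n)

theorem circ : Nonempty (AddCircle (1 : ℝ) ≃ₜ Metric.sphere (0 : EuclideanSpace ℝ (Fin 2)) 1) := by
  let e : ℂ ≃ₗᵢ[ℝ] EuclideanSpace ℝ (Fin 2) := Complex.orthonormalBasisOneI.repr
  have h1 : Circle ≃ₜ Metric.sphere (0 : EuclideanSpace ℝ (Fin 2)) 1 :=
    { toFun := fun z => ⟨e z, by rw [mem_sphere_zero_iff_norm, e.norm_map]; exact Circle.norm_coe z⟩
      invFun := fun z => ⟨e.symm z, by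
        have := z.2
        rw [mem_sphere_zero_iff_norm] at this
        simp [Submonoid.unitSphere, this]⟩
      left_inv := fun z => by ext; simp
      right_inv := fun z => by apply Subtype.ext; simp
      continuous_toFun := by fun_prop
      continuous_invFun := by fun_prop }
  exact ⟨(AddCircle.homeomorphCircle one_ne_zero).trans h1⟩

theorem lift_real (f : ℝ → AddCircle (1 : ℝ)) (hf : Continuous f) :
    ∃ g : ℝ → ℝ, Continuous g ∧ ∀ t, (g t : AddCircle (1 : ℝ)) = f t := by
  obtain ⟨e0, he0⟩ := QuotientAddGroup.mk_surjective (f 0)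
  obtain ⟨F, ⟨-, hF⟩, -⟩ := (AddCircle.isCoveringMap_coe (1 : ℝ)).existsUnique_continuousMap_lifts
    (⟨f, hf⟩ : C(ℝ, AddCircle (1 : ℝ))) 0 e0 he0
  exact ⟨F, F.continuous, fun t => congrFun hF t⟩

theorem exists_curve {C : Set TT}
    (h : Nonempty (↥C ≃ₜ ↥(Metric.sphere (0 : EuclideanSpace ℝ (Fin 2)) 1))) :
    Nonempty (Curve C) := by
  obtain ⟨e⟩ := h
  obtain ⟨e'⟩ := circ
  let ψ : AddCircle (1 : ℝ) ≃ₜ C := e'.trans e.symm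
  have hψ : Continuous fun t : ℝ => (ψ (t : AddCircle (1 : ℝ)) : TT) := by
    have : Continuous fun t : ℝ => (t : AddCircle (1 : ℝ)) := AddCircle.continuous_mk' 1
    fun_prop
  obtain ⟨c1, hc1, h1⟩ := lift_real _ (continuous_fst.comp hψ)
  obtain ⟨c2, hc2, h2⟩ := lift_real _ (continuous_snd.comp hψ)
  let c : ℝ → ℝ × ℝ := fun t => (c1 t, c2 t)
  have hc : Continuous c := hc1.prodMk hc2
  have hE : ∀ t, EE (c t) = ψ (t : AddCircle (1 : ℝ)) := fun t => Prod.ext (h1 t) (h2 t)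
  have hinj : ∀ s t : ℝ, EE (c s) = EE (c t) → ∃ n : ℤ, t = s + n := by
    intro s t hst
    rw [hE, hE] at hst
    exact coe_eq_int (ψ.injective (Subtype.ext hst))
  have h01 : EE (c 0) = EE (c 1) := by
    rw [hE, hE]
    have := coe_add_int 0 1
    simp only [zero_add, Int.cast_one] at this
    rw [this]
  obtain ⟨m, n, hmn⟩ := EE_eq h01
  have hcont : Continuous fun t => EE (c t) := EE_cont.comp hc
  refine ⟨{ p := c (1 / 2), q := c 0, m := m, n := n
            A := (fun t => EE (c t)) '' Set.Icc 0 (1 / 2)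
            B := (fun t => EE (c t)) '' Set.Icc (1 / 2) 1
            hA := (isCompact_Icc.image hcont).isClosed
            hB := (isCompact_Icc.image hcont).isClosed
            hAB := ?_
            hinter := ?_
            hpA := ⟨1 / 2, by norm_num, rfl⟩
            hpB := ⟨1 / 2, by norm_num, rfl⟩
            hqA := ⟨0, by norm_num, rfl⟩
            hqB := ⟨1, by norm_num, h01.symm⟩
            hpq := ?_
            logA := arc_log hc (by norm_num)
            logB := ?_
            c := c
            hc := hc
            hcC := fun t _ => by rw [hE]; exact (ψ _).2
            hc1 := hmn }⟩
  · rw [← Set.image_union, Set.Icc_union_Icc_eq_Icc (by norm_num) (by norm_num)]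
    apply Set.Subset.antisymm
    · rintro _ ⟨t, _, rfl⟩
      simp only [hE]; exact (ψ _).2
    · intro z hz
      obtain ⟨x, hx⟩ := QuotientAddGroup.mk_surjective (ψ.symm ⟨z, hz⟩)
      refine ⟨Int.fract x, ⟨Int.fract_nonneg x, (Int.fract_lt_one x).le⟩, ?_⟩
      simp only [hE]
      have : ((Int.fract x : ℝ) : AddCircle (1 : ℝ)) = x := by
        rw [← coe_add_int (Int.fract x) ⌊x⌋, Int.fract_add_floor]
      rw [this]
      have hx : (x : AddCircle (1 : ℝ)) = ψ.symm ⟨z, hz⟩ := hx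
      rw [hx]; simp
  · rintro z ⟨⟨s, hs, rfl⟩, ⟨t, ht, hst⟩⟩
    obtain ⟨k, hk⟩ := hinj _ _ hst
    have hs1 := hs.1
    have hs2 := hs.2
    have ht1 := ht.1
    have ht2 := ht.2
    have k1 : (k : ℝ) ≤ 0 := by linarith
    have k2 : (-1 : ℝ) ≤ k := by linarith
    have k1' : k ≤ 0 := by exact_mod_cast k1
    have k2' : -1 ≤ k := by exact_mod_cast k2
    have : k = 0 ∨ k = -1 := by omega
    rcases this with rfl | rfl
    · left
      have : s = 1 / 2 := by push_cast at hk; linarith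
      simp [this]
    · right
      have : s = 0 := by push_cast at hk; linarith
      simp [this]
  · intro h
    obtain ⟨k, hk⟩ := hinj _ _ h
    have : (2 * k : ℝ) = -1 := by linarith
    have : (2 * k : ℤ) = -1 := by exact_mod_cast this
    omega
  · rw [← hmn]
    exact arc_log hc (by norm_num)

theorem ee_zpow (t : ℝ) (k : ℤ) : ee t ^ k = ee (k * t) := by
  unfold ee; rw [← Complex.exp_int_mul]; congr 1; push_cast; ring

namespace Curve
variable {C : Set TT} (P : Curve C)

theorem ne_of_notMem_A {z : TT} (h : z ∉ P.A) : z ≠ EE P.p ∧ z ≠ EE P.q :=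
  ⟨fun h' => h (h' ▸ P.hpA), fun h' => h (h' ▸ P.hqA)⟩

theorem ne_of_notMem_B {z : TT} (h : z ∉ P.B) : z ≠ EE P.p ∧ z ≠ EE P.q :=
  ⟨fun h' => h (h' ▸ P.hpB), fun h' => h (h' ▸ P.hqB)⟩

theorem pairing {C' : Set TT} (P' : Curve C') (hd : Disjoint C C') :
    P.n * P'.m = P.m * P'.n := by
  have hA : P.A ⊆ C := Set.subset_union_left.trans P.hAB.subset
  have hB : P.B ⊆ C := Set.subset_union_right.trans P.hAB.subset
  have h1 : HasLog (fT (P.q.1 + P.m, P.q.2 + P.n) P.q) Cᶜ := by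
    refine ((P.logB.mono (Set.compl_subset_compl.2 hB)).mul
      (P.logA.mono (Set.compl_subset_compl.2 hA))).congr ?_
    intro z hz
    rw [fT_mul]
    exact (P.ne_of_notMem_A (fun h => hz (hA h))).1
  have hmaps : Set.MapsTo (fun t => EE (P'.c t)) (Set.Icc 0 1) Cᶜ :=
    fun t ht h => Set.disjoint_left.1 hd h (P'.hcC t ht)
  have hq : ∀ t ∈ Set.Icc (0 : ℝ) 1, EE (P'.c t) ≠ EE P.q := fun t ht =>
    (P.ne_of_notMem_A (fun h => hmaps ht (hA h))).2
  obtain ⟨G, G1, G2⟩ := (h1.mul (HasLog.const (inv_ne_zero (ee_ne (P.n * (1 / 2 - P.q.1)))) _))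
  let g : ℝ → ℂ := fun t => G (EE (P'.c t))
  have g1 : ContinuousOn g (Set.Icc 0 1) := G1.comp (EE_cont.comp P'.hc).continuousOn hmaps
  have g01 : g 0 = g 1 := by simp only [g, P'.hc1, EE_add_int]
  have g0 : ∀ t ∈ Set.Icc (0 : ℝ) 1,
      Complex.exp (g t) = ee (P.n * (P'.c t).1 - P.m * (P'.c t).2) := by
    intro t ht
    simp only [g]
    rw [← G2 _ (hmaps ht)]
    simp only
    rw [fT_char _ _ (hq t ht), mul_comm (ee (P.n * (1 / 2 - P.q.1))) _, mul_assoc,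
      mul_inv_cancel₀ (ee_ne _), mul_one]
  have hcc := P'.hc
  have h01 : g 0 - 2 * Real.pi * ((P.n * (P'.c 0).1 - P.m * (P'.c 0).2 : ℝ) : ℂ) * Complex.I =
    g 1 - 2 * Real.pi * ((P.n * (P'.c 1).1 - P.m * (P'.c 1).2 : ℝ) : ℂ) * Complex.I := by
    refine log_const (S := Set.Icc (0 : ℝ) 1) (D := fun t => g t - 2 * Real.pi *
      ((P.n * (P'.c t).1 - P.m * (P'.c t).2 : ℝ) : ℂ) * Complex.I) isPreconnected_Icc
      (g1.sub (Continuous.continuousOn (by fun_prop))) ?_ (by simp) (by simp)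
    intro t ht
    rw [Complex.exp_sub, g0 t ht]
    exact div_self (ee_ne _)
  rw [g01, P'.hc1] at h01
  have h2 : (2 * Real.pi * Complex.I) * ((P.n * P'.m - P.m * P'.n : ℤ) : ℂ) = 0 := by
    push_cast at h01 ⊢
    linear_combination h01
  rcases mul_eq_zero.1 h2 with h | h
  · exact absurd h Complex.two_pi_I_ne_zero
  · have : P.n * P'.m - P.m * P'.n = 0 := by exact_mod_cast h
    linarith

/-- nonvanishing local winding -/
theorem core {C' : Set TT} (P' : Curve C') (hd : Disjoint C C') {K : Set TT} (hK : IsClosed K)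
    (hKC : Disjoint K C) (hKC' : Disjoint K C') (k k' : ℤ) (hm : k * P.m = k' * P'.m)
    (hn : k * P.n = k' * P'.n) (hk : k ≠ 0) (hpre : IsPreconnected (C ∪ C' ∪ K)ᶜ) : False := by
  have hA : P.A ⊆ C := Set.subset_union_left.trans P.hAB.subset
  have hB : P.B ⊆ C := Set.subset_union_right.trans P.hAB.subset
  have hA' : P'.A ⊆ C' := Set.subset_union_left.trans P'.hAB.subset
  have hB' : P'.B ⊆ C' := Set.subset_union_right.trans P'.hAB.subset
  let F : TT → ℂ := fun z => fT P.p P.q z ^ k * fT P'.p P'.q z ^ (-k')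
  let U : Set TT := (P.A ∪ P'.A ∪ K)ᶜ
  let V : Set TT := (P.B ∪ P'.B ∪ K)ᶜ
  have hU : IsOpen U := ((P.hA.union P'.hA).union hK).isOpen_compl
  have hV : IsOpen V := ((P.hB.union P'.hB).union hK).isOpen_compl
  have F1 : HasLog F U := by
    refine ((P.logA.mono ?_).zpow k).mul ((P'.logA.mono ?_).zpow (-k'))
    · exact Set.compl_subset_compl.2 fun z hz => Or.inl (Or.inl hz)
    · exact Set.compl_subset_compl.2 fun z hz => Or.inl (Or.inr hz)
  have F2 : HasLog F V := by
    have h1 : HasLog (fT (P.q.1 + P.m, P.q.2 + P.n) P.p) V :=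
      P.logB.mono (Set.compl_subset_compl.2 fun z hz => Or.inl (Or.inl hz))
    have h2 : HasLog (fT (P'.q.1 + P'.m, P'.q.2 + P'.n) P'.p) V :=
      P'.logB.mono (Set.compl_subset_compl.2 fun z hz => Or.inl (Or.inr hz))
    let a := ee (P.n * (1 / 2 - P.q.1))
    let a' := ee (P'.n * (1 / 2 - P'.q.1))
    have ha : a ^ k * a' ^ (-k') ≠ 0 :=
      mul_ne_zero (zpow_ne_zero _ (ee_ne _)) (zpow_ne_zero _ (ee_ne _))
    refine (((h1.zpow (-k)).mul (h2.zpow k')).mul (HasLog.const ha V)).congr ?_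
    intro z hz
    obtain ⟨w, rfl⟩ := EE_quot.surjective z
    have n1 := P.ne_of_notMem_B (fun h => hz (Or.inl (Or.inl h)))
    have n2 := P'.ne_of_notMem_B (fun h => hz (Or.inl (Or.inr h)))
    have e1 := fT_mul (p := (P.q.1 + P.m, P.q.2 + P.n)) (r := P.q) n1.1
    have e2 := fT_mul (p := (P'.q.1 + P'.m, P'.q.2 + P'.n)) (r := P'.q) n2.1
    rw [fT_char _ _ n1.2] at e1
    rw [fT_char _ _ n2.2] at e2
    have z1 : fT (P.q.1 + P.m, P.q.2 + P.n) P.p (EE w) ≠ 0 :=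
      fT_ne (by rw [EE_add_int]; exact n1.2) n1.1
    have z2 : fT (P'.q.1 + P'.m, P'.q.2 + P'.n) P'.p (EE w) ≠ 0 :=
      fT_ne (by rw [EE_add_int]; exact n2.2) n2.1
    have f1 := congrArg (· ^ k) e1
    have f2 := congrArg (· ^ (-k')) e2
    simp only [mul_zpow, ee_zpow] at f1 f2
    have ec : ee (k * (P.n * w.1 - P.m * w.2)) *
        ee (((-k' : ℤ) : ℝ) * (P'.n * w.1 - P'.m * w.2)) = 1 := by
      rw [← ee_add]
      have hm' : (k * P.m : ℝ) = k' * P'.m := by exact_mod_cast hm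
      have hn' : (k * P.n : ℝ) = k' * P'.n := by exact_mod_cast hn
      rw [show (k * (P.n * w.1 - P.m * w.2) + ((-k' : ℤ) : ℝ) * (P'.n * w.1 - P'.m * w.2) : ℝ) = 0 by
        push_cast; linear_combination w.1 * hn' - w.2 * hm', ee_zero]
    simp only [F, a, a', ee_zpow]
    generalize fT (P.q.1 + P.m, P.q.2 + P.n) P.p (EE w) = x at *
    generalize fT (P'.q.1 + P'.m, P'.q.2 + P'.n) P'.p (EE w) = x' at *
    generalize fT P.p P.q (EE w) = y at *
    generalize fT P'.p P'.q (EE w) = y' at *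
    have g1 : y ^ k = x ^ (-k) * (x ^ k * y ^ k) := by
      rw [← mul_assoc, ← zpow_add₀ z1]; simp
    have g2 : y' ^ (-k') = x' ^ k' * (x' ^ (-k') * y' ^ (-k')) := by
      rw [← mul_assoc, ← zpow_add₀ z2]; simp
    rw [g1, g2, f1, f2]
    linear_combination x ^ (-k) * x' ^ k' * ee (k * (P.n * (1 / 2 - P.q.1))) *
      ee (((-k' : ℤ) : ℝ) * (P'.n * (1 / 2 - P'.q.1))) * ec
  have hUV : U ∩ V = (C ∪ C' ∪ K)ᶜ := by
    simp only [U, V]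
    rw [← Set.compl_union]
    congr 1
    conv_rhs => rw [← P.hAB, ← P'.hAB]
    ext z; simp only [Set.mem_union]; tauto
  have F3 : HasLog F (U ∪ V) := F1.glue hU hV F2 (by rw [hUV]; exact hpre)
  have hpC : EE P.p ∈ C := hA P.hpA
  have np : EE P.p ≠ EE P'.p := fun h => Set.disjoint_left.1 hd hpC (h ▸ hA' P'.hpA)
  have nq : EE P.p ≠ EE P'.q := fun h => Set.disjoint_left.1 hd hpC (h ▸ hA' P'.hqA)
  have nK : EE P.p ∉ K := fun h => Set.disjoint_left.1 hKC h hpC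
  let R : ℝ × ℝ → ℂ := fun z => ((sg (z - P.q))⁻¹ * ee (-((P.p.1 - P.q.1) * z.2))) ^ k *
    ft P'.p P'.q z ^ (-k')
  have ev : ∀ᶠ z in nhds P.p, EE z ≠ EE P.q ∧ EE z ≠ EE P'.p ∧ EE z ≠ EE P'.q ∧ EE z ∉ K ∧
      |z.1 - P.p.1| < 1 ∧ |z.2 - P.p.2| < 1 := by
    have cE := EE_cont.continuousAt (x := P.p)
    refine (cE.eventually_ne P.hpq).and ((cE.eventually_ne np).and ((cE.eventually_ne nq).and
      ((cE.eventually (hK.isOpen_compl.mem_nhds nK)).and (Filter.Eventually.and ?_ ?_))))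
    · have : Continuous fun z : ℝ × ℝ => |z.1 - P.p.1| := by fun_prop
      exact this.continuousAt.eventually_lt_const (by simp)
    · have : Continuous fun z : ℝ × ℝ => |z.2 - P.p.2| := by fun_prop
      exact this.continuousAt.eventually_lt_const (by simp)
  have R0 : R P.p ≠ 0 := by
    refine mul_ne_zero (zpow_ne_zero _ (mul_ne_zero (inv_ne_zero (sg_sub_ne P.hpq)) (ee_ne _)))
      (zpow_ne_zero _ ?_)
    rw [← fT_EE]; exact fT_ne np nq
  have Rc : ∀ᶠ z in nhds P.p, ContinuousAt R z := by
    filter_upwards [ev] with z hz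
    have c1 : Continuous fun z => sg (z - P.q) := sg_cont.comp (by fun_prop)
    have c2 : Continuous fun z : ℝ × ℝ => ee (-((P.p.1 - P.q.1) * z.2)) := ee_cont.comp (by fun_prop)
    have c3 : ContinuousAt (fun z => ft P'.p P'.q z) z :=
      ContinuousAt.comp (f := fun z => (P'.p, z)) (ft_contAt hz.2.2.1) (by fun_prop)
    refine ContinuousAt.mul ?_ ?_
    · refine ((c1.continuousAt.inv₀ (sg_sub_ne hz.1)).mul c2.continuousAt).zpow₀ _ (Or.inl ?_)
      exact mul_ne_zero (inv_ne_zero (sg_sub_ne hz.1)) (ee_ne _)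
    · refine c3.zpow₀ _ (Or.inl ?_)
      rw [← fT_EE]; exact fT_ne hz.2.1 hz.2.2.1
  obtain ⟨W, hW, hWR⟩ := HasLog.local Rc R0
  have hWW := Filter.inter_mem hW ev
  refine no_log hk hWW ?_
  have hmaps : Set.MapsTo EE ((W ∩ {z | EE z ≠ EE P.q ∧ EE z ≠ EE P'.p ∧ EE z ≠ EE P'.q ∧ EE z ∉ K ∧
      |z.1 - P.p.1| < 1 ∧ |z.2 - P.p.2| < 1}) \ {P.p}) (U ∪ V) := by
    rintro z ⟨⟨_, h1, h2, h3, h4, h5, h6⟩, h7⟩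
    have h8 : EE z ≠ EE P.p := by
      intro h
      apply h7
      obtain ⟨a, b, hab⟩ := EE_eq h
      rw [hab] at h5 h6
      have h5 : |(a : ℝ)| < 1 := by simpa using h5
      have h6 : |(b : ℝ)| < 1 := by simpa using h6
      have a0 : a = 0 := Int.abs_lt_one_iff.1 (by exact_mod_cast h5)
      have b0 : b = 0 := Int.abs_lt_one_iff.1 (by exact_mod_cast h6)
      rw [a0, b0] at hab
      simp only [Int.cast_zero, add_zero] at hab
      exact hab.symm
    by_contra hcon
    rw [Set.mem_union, not_or, Set.notMem_compl_iff, Set.notMem_compl_iff] at hcon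
    obtain ⟨(hx | hx) | hx, hy⟩ := hcon
    · rcases hy with (hy | hy) | hy
      · rcases P.hinter ⟨hx, hy⟩ with h | h
        · exact h8 h
        · exact h1 h
      · exact Set.disjoint_left.1 hd (hA hx) (hB' hy)
      · exact h4 hy
    · rcases hy with (hy | hy) | hy
      · exact Set.disjoint_left.1 hd (hB hy) (hA' hx)
      · rcases P'.hinter ⟨hx, hy⟩ with h | h
        · exact h2 h
        · exact h3 h
      · exact h4 hy
    · exact h4 hx
  have F4 := F3.comp EE_cont.continuousOn hmaps
  have hR := (hWR.mono (V := ((W ∩ {z | EE z ≠ EE P.q ∧ EE z ≠ EE P'.p ∧ EE z ≠ EE P'.q ∧ EE z ∉ K ∧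
      |z.1 - P.p.1| < 1 ∧ |z.2 - P.p.2| < 1}) \ {P.p})) (fun z hz => hz.1.1)).inv
  refine (F4.mul hR).congr ?_
  rintro z ⟨⟨_, h1, h2, h3, h4, h5, h6⟩, h7⟩
  simp only [F, R, fT_EE]
  have d1 : ft P'.p P'.q z ^ (-k') ≠ 0 := zpow_ne_zero _ (by rw [← fT_EE]; exact fT_ne h2 h3)
  have d2 : ((sg (z - P.q))⁻¹ * ee (-((P.p.1 - P.q.1) * z.2))) ^ k ≠ 0 :=
    zpow_ne_zero _ (mul_ne_zero (inv_ne_zero (sg_sub_ne h1)) (ee_ne _))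
  have d3 : ft P.p P.q z ^ k = sg (z - P.p) ^ k *
      ((sg (z - P.q))⁻¹ * ee (-((P.p.1 - P.q.1) * z.2))) ^ k := by
    rw [← mul_zpow]; congr 1; unfold ft; rw [div_eq_mul_inv, mul_assoc]
  rw [d3, mul_inv, mul_mul_mul_comm, mul_inv_cancel₀ d1, mul_one, mul_assoc, mul_inv_cancel₀ d2,
    mul_one]

theorem main {C C' : Set TT} (P : Curve C) (P' : Curve C') (hd : Disjoint C C') {K : Set TT} (hK : IsClosed K)
    (hKC : Disjoint K C) (hKC' : Disjoint K C') : ¬ IsPreconnected (C ∪ C' ∪ K)ᶜ := by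
  intro hpre
  have hpair := P.pairing P' hd
  have : ∃ k k' : ℤ, k * P.m = k' * P'.m ∧ k * P.n = k' * P'.n ∧ (k ≠ 0 ∨ k' ≠ 0) := by
    by_cases h1 : P.m ≠ 0 ∨ P'.m ≠ 0
    · exact ⟨P'.m, P.m, by ring, by linarith, h1.symm⟩
    · push Not at h1
      by_cases h2 : P.n ≠ 0 ∨ P'.n ≠ 0
      · exact ⟨P'.n, P.n, by rw [h1.1, h1.2]; ring, by ring, h2.symm⟩
      · push Not at h2
        exact ⟨1, 1, by rw [h1.1, h1.2], by rw [h2.1, h2.2], by simp⟩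
  obtain ⟨k, k', hm, hn, h | h⟩ := this
  · exact P.core P' hd hK hKC hKC' k k' hm hn h hpre
  · exact P'.core P hd.symm hK hKC' hKC k' k hm.symm hn.symm h (by rwa [Set.union_comm C' C])

end Curve

theorem curve_sep {C₁ C₂ K : Set TT} (hd : Disjoint C₁ C₂)
    (h1 : Nonempty (↥C₁ ≃ₜ ↥(Metric.sphere (0 : EuclideanSpace ℝ (Fin 2)) 1)))
    (h2 : Nonempty (↥C₂ ≃ₜ ↥(Metric.sphere (0 : EuclideanSpace ℝ (Fin 2)) 1)))
    (hK : IsClosed K) (hKC : Disjoint K C₁) (hKC' : Disjoint K C₂) :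
    ¬ IsPreconnected (C₁ ∪ C₂ ∪ K)ᶜ := by
  obtain ⟨P⟩ := exists_curve h1
  obtain ⟨P'⟩ := exists_curve h2
  exact P.main P' hd hK hKC hKC'

theorem circle_closed {C : Set TT}
    (h : Nonempty (↥C ≃ₜ ↥(Metric.sphere (0 : EuclideanSpace ℝ (Fin 2)) 1))) : IsClosed C := by
  obtain ⟨e⟩ := h
  have : CompactSpace C := e.symm.compactSpace
  exact (isCompact_iff_compactSpace.2 this).isClosed

theorem exists_nonsep : ∃ C : Set TT,
      Nonempty (↥C ≃ₜ ↥(Metric.sphere (0 : EuclideanSpace ℝ (Fin 2)) 1)) ∧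
      IsConnected Cᶜ := by
  obtain ⟨e⟩ := circ
  refine ⟨{0} ×ˢ Set.univ, ⟨Homeomorph.trans ?_ e⟩, ?_⟩
  · exact
      { toFun := fun z => z.1.2
        invFun := fun y => ⟨(0, y), by simp⟩
        left_inv := by
          rintro ⟨⟨x, y⟩, hx⟩
          apply Subtype.ext
          have : x = 0 := by simpa using hx
          simp [this]
        right_inv := fun y => rfl
        continuous_toFun := by fun_prop
        continuous_invFun := by fun_prop }
  · have : (({0} : Set (AddCircle (1 : ℝ))) ×ˢ (Set.univ : Set (AddCircle (1 : ℝ))))ᶜ =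
      ((fun t : ℝ => (t : AddCircle (1 : ℝ))) '' Set.Ioo 0 1) ×ˢ Set.univ := by
      ext ⟨x, y⟩
      simp only [Set.mem_compl_iff, Set.mem_prod, Set.mem_singleton_iff, Set.mem_univ, and_true,
        Set.mem_image]
      constructor
      · intro hx
        obtain ⟨t, rfl⟩ := QuotientAddGroup.mk_surjective x
        have ht : ((Int.fract t : ℝ) : AddCircle (1 : ℝ)) = t := by
          rw [← coe_add_int (Int.fract t) ⌊t⌋, Int.fract_add_floor]
        refine ⟨Int.fract t, ⟨lt_of_le_of_ne (Int.fract_nonneg t) ?_, Int.fract_lt_one t⟩, ht⟩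
        intro h
        apply hx
        rw [← h] at ht
        exact ht.symm
      · rintro ⟨t, ht, rfl⟩ h0
        obtain ⟨n, hn⟩ := (AddCircle.coe_eq_zero_iff (1 : ℝ)).1 h0
        simp only [zsmul_eq_mul, mul_one] at hn
        rw [← hn] at ht
        have h1 : 0 < n := by exact_mod_cast ht.1
        have h2 : n < 1 := by exact_mod_cast ht.2
        omega
    rw [this]
    refine IsConnected.prod ?_ isConnected_univ
    exact (isConnected_Ioo (by norm_num)).image _ (AddCircle.continuous_mk' 1).continuousOn

/-- the genus of the torus `T² = (ℝ/ℤ) × (ℝ/ℤ)` is `1`: there is a subset of `T²`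
homeomorphic to `S¹` with connected complement, and any two disjoint such subsets together have
disconnected complement. -/
theorem genus_torus_eq_one :
    genus (AddCircle (1 : ℝ) × AddCircle (1 : ℝ)) = 1 ∧
    (∃ C : Set (AddCircle (1 : ℝ) × AddCircle (1 : ℝ)),
      Nonempty (↥C ≃ₜ ↥(Metric.sphere (0 : EuclideanSpace ℝ (Fin 2)) 1)) ∧
      IsConnected Cᶜ) ∧
    (∀ C₁ C₂ : Set (AddCircle (1 : ℝ) × AddCircle (1 : ℝ)), Disjoint C₁ C₂ →
      Nonempty (↥C₁ ≃ₜ ↥(Metric.sphere (0 : EuclideanSpace ℝ (Fin 2)) 1)) →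
      Nonempty (↥C₂ ≃ₜ ↥(Metric.sphere (0 : EuclideanSpace ℝ (Fin 2)) 1)) →
      ¬ IsPreconnected (C₁ ∪ C₂)ᶜ) := by
  refine ⟨?_, exists_nonsep, ?_⟩
  · unfold genus
    refine IsGreatest.csSup_eq ⟨?_, ?_⟩
    · obtain ⟨C, h1, h2⟩ := exists_nonsep
      refine ⟨fun _ => C, fun i j hij => absurd (Subsingleton.elim i j) hij, fun _ => h1, ?_⟩
      rwa [Set.iUnion_const]
    · rintro k ⟨C, hd, hC, hcon⟩
      by_contra hk
      push Not at hk
      let i0 : Fin k := ⟨0, by omega⟩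
      let i1 : Fin k := ⟨1, hk⟩
      have h01 : i0 ≠ i1 := by simp [i0, i1, Fin.ext_iff]
      let K : Set TT := ⋃ i : {i : Fin k // i ≠ i0 ∧ i ≠ i1}, C i
      have hK : IsClosed K := isClosed_iUnion_of_finite fun i => circle_closed (hC i)
      refine curve_sep (K := K) (hd h01) (hC i0) (hC i1) hK ?_ ?_ ?_
      · exact Set.disjoint_iUnion_left.2 fun i => hd i.2.1
      · exact Set.disjoint_iUnion_left.2 fun i => hd i.2.2
      · convert! hcon.isPreconnected using 2
        ext z
        simp only [K, Set.mem_union, Set.mem_iUnion]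
        constructor
        · rintro ((h | h) | ⟨i, h⟩)
          · exact ⟨_, h⟩
          · exact ⟨_, h⟩
          · exact ⟨_, h⟩
        · rintro ⟨i, h⟩
          by_cases hi0 : i = i0
          · exact Or.inl (Or.inl (hi0 ▸ h))
          · by_cases hi1 : i = i1
            · exact Or.inl (Or.inr (hi1 ▸ h))
            · exact Or.inr ⟨⟨i, hi0, hi1⟩, h⟩
  · intro C₁ C₂ hd h1 h2
    have := curve_sep hd h1 h2 isClosed_empty (Set.empty_disjoint _) (Set.empty_disjoint _)
    rwa [Set.union_empty] at this
end

section
/- Let n ≥ 1 and let α and β be chord diagrams on 2n points, i.e., fixed-point-free involutions of ℤ/2n. For all starting points s, t ∈ ℤ/2n: the code of α read from s equals the code of β read from t if and only if β = ρ ∘ α ∘ ρ⁻¹, where ρ : ℤ/2n → ℤ/2n is the rotation ρ(x) = x + (t − s). In particular, the code of a chord diagram determines the diagram uniquely up to rotation of the points. -/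
namespace ChordDiag

/-- The index of the first point, when traversing `s, s + 1, s + 2, …`, lying on the same chord
of the chord diagram `α` as the point `s + k`. -/
noncomputable def firstIdx {m : ℕ} (α : Equiv.Perm (ZMod m)) (s : ZMod m) (k : ℕ) : ℕ :=
  Nat.find (show ∃ j : ℕ,
      (s + (j : ZMod m) = s + (k : ZMod m) ∨ s + (j : ZMod m) = α (s + (k : ZMod m))) from
    ⟨k, Or.inl rfl⟩)

/-- The code of the chord diagram `α` read from the starting point `s`: `code α s k` is the label
of the chord containing the point `s + k`, where the chords are labeled `1, 2, 3, …` in the order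
of their first appearance along the traversal `s, s + 1, s + 2, …`. -/
noncomputable def code {m : ℕ} (α : Equiv.Perm (ZMod m)) (s : ZMod m) (k : ℕ) : ℕ :=
  ((Finset.range (firstIdx α s k + 1)).filter (fun j => firstIdx α s j = j)).card

theorem firstIdx_spec {m : ℕ} (α : Equiv.Perm (ZMod m)) (s : ZMod m) (k : ℕ) :
    s + (firstIdx α s k : ZMod m) = s + (k : ZMod m) ∨
      s + (firstIdx α s k : ZMod m) = α (s + (k : ZMod m)) := by
  unfold firstIdx
  exact Nat.find_spec (p := fun j : ℕ => s + (j : ZMod m) = s + (k : ZMod m) ∨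
    s + (j : ZMod m) = α (s + (k : ZMod m))) _

theorem firstIdx_congr {m : ℕ} {α β : Equiv.Perm (ZMod m)} {s t : ZMod m} {k l : ℕ}
    (h : ∀ j : ℕ, (s + (j : ZMod m) = s + (k : ZMod m) ∨ s + (j : ZMod m) = α (s + (k : ZMod m))) ↔
      (t + (j : ZMod m) = t + (l : ZMod m) ∨ t + (j : ZMod m) = β (t + (l : ZMod m)))) :
    firstIdx α s k = firstIdx β t l := by
  unfold firstIdx
  exact Nat.find_congr' (h _)

theorem firstIdx_of_chord {m : ℕ} {α : Equiv.Perm (ZMod m)} (hα : Function.Involutive α)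
    {s : ZMod m} {k l : ℕ}
    (h : s + (l : ZMod m) = s + (k : ZMod m) ∨ s + (l : ZMod m) = α (s + (k : ZMod m))) :
    firstIdx α s l = firstIdx α s k := by
  apply firstIdx_congr
  intro j
  rcases h with h | h
  · rw [h]
  · rw [h, hα]
    exact or_comm

theorem firstIdx_idem {m : ℕ} {α : Equiv.Perm (ZMod m)} (hα : Function.Involutive α)
    (s : ZMod m) (k : ℕ) : firstIdx α s (firstIdx α s k) = firstIdx α s k :=
  firstIdx_of_chord hα (firstIdx_spec α s k)

theorem code_lt {m : ℕ} {α : Equiv.Perm (ZMod m)} (hα : Function.Involutive α)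
    {s : ZMod m} {k l : ℕ} (h : firstIdx α s k < firstIdx α s l) : code α s k < code α s l := by
  unfold code
  apply Finset.card_lt_card
  rw [Finset.ssubset_iff_of_subset]
  · refine ⟨firstIdx α s l, ?_, ?_⟩
    · simp [firstIdx_idem hα]
    · simp; omega
  · intro j
    simp only [Finset.mem_filter, Finset.mem_range]
    rintro ⟨h1, h2⟩
    exact ⟨by omega, h2⟩

theorem chord_of_code {m : ℕ} {α : Equiv.Perm (ZMod m)} (hα : Function.Involutive α)
    {s : ZMod m} {k l : ℕ} (h : code α s k = code α s l) :
    s + (l : ZMod m) = s + (k : ZMod m) ∨ s + (l : ZMod m) = α (s + (k : ZMod m)) := by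
  have e : firstIdx α s k = firstIdx α s l := by
    rcases lt_trichotomy (firstIdx α s k) (firstIdx α s l) with h1 | h1 | h1
    · exact absurd h (code_lt hα h1).ne
    · exact h1
    · exact absurd h (code_lt hα h1).ne'
  have a := firstIdx_spec α s k
  have b := firstIdx_spec α s l
  rw [← e] at b
  rcases a with a | a <;> rcases b with b | b
  · left; rw [← a, ← b]
  · right; rw [← a, b, hα]
  · right; rw [← a, ← b]
  · left; exact α.injective (by rw [← a, ← b])

/-- for chord diagrams `α`, `β` on `2n` points (fixed-point-free involutions of
`ℤ/2n`) and starting points `s`, `t`, the code of `α` read from `s` equals the code of `β` read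
from `t` iff `β = ρ ∘ α ∘ ρ⁻¹` where `ρ` is the rotation `x ↦ x + (t - s)`. -/
theorem code_eq_iff_rotation (n : ℕ) (hn : 1 ≤ n) (α β : Equiv.Perm (ZMod (2 * n)))
    (hαinv : Function.Involutive α) (hαfree : ∀ x, α x ≠ x)
    (hβinv : Function.Involutive β) (hβfree : ∀ x, β x ≠ x)
    (s t : ZMod (2 * n)) :
    (∀ k < 2 * n, code α s k = code β t k) ↔
      β = (Equiv.addRight (t - s)).symm.trans ((α : Equiv.Perm (ZMod (2 * n))).trans
        (Equiv.addRight (t - s))) := by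
  haveI : NeZero (2 * n) := ⟨by omega⟩
  constructor
  · intro h
    ext1 x
    obtain ⟨k, hk, hkx⟩ : ∃ k : ℕ, k < 2 * n ∧ (k : ZMod (2 * n)) = x - t :=
      ⟨(x - t).val, ZMod.val_lt _, ZMod.natCast_zmod_val _⟩
    obtain ⟨l, hl, hlx⟩ : ∃ l : ℕ, l < 2 * n ∧ (l : ZMod (2 * n)) = α (s + (k : ZMod (2 * n))) - s :=
      ⟨(α (s + (k : ZMod (2 * n))) - s).val, ZMod.val_lt _, ZMod.natCast_zmod_val _⟩
    have e : code α s k = code α s l := by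
      unfold code
      rw [firstIdx_of_chord hαinv (k := k) (l := l) (Or.inr (by rw [hlx]; ring))]
    rw [h k hk, h l hl] at e
    rcases chord_of_code hβinv e with e | e
    · exfalso
      have e2 : (l : ZMod (2 * n)) = k := add_left_cancel e
      apply hαfree (s + (k : ZMod (2 * n)))
      linear_combination e2 - hlx
    · have e3 : t + (k : ZMod (2 * n)) = x := by rw [hkx]; ring
      rw [e3, hlx, hkx] at e
      rw [← e]
      have e4 : x + (s - t) = s + (x - t) := by ring
      simp [Equiv.addRight, e4, Equiv.trans_apply]
      try ring_nf
  · intro h k _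
    have e : ∀ k, firstIdx α s k = firstIdx β t k := by
      intro k
      apply firstIdx_congr
      intro j
      have e1 : β (t + (k : ZMod (2 * n))) = α (s + (k : ZMod (2 * n))) + (t - s) := by
        rw [h]
        have e4 : t + (k : ZMod (2 * n)) + (s - t) = s + k := by ring
        simp [Equiv.trans_apply, e4]
      rw [e1, add_right_inj, add_right_inj]
      refine or_congr Iff.rfl ⟨fun q => ?_, fun q => ?_⟩
      · rw [← q]; ring
      · linear_combination q
    unfold code
    simp only [e]

end ChordDiag
end
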